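/- arXiv:2210.00210 — 2 statements merged into one kernel-verified Lean document; each statement's English description precedes it below -/
import Mathlib

section
/- Let G be a chordal finite simple graph and let Δ(G) be its clique complex. Then, for any field K, the reduced simplicial homology H̃_i(Δ(G); K) and reduced simplicial cohomology H̃^i(Δ(G); K) vanish for every i ≠ 0. -/
open MvPolynomial

/-- The edge ideal of a graph, generated by `xᵢxⱼ` for edges `{i,j}`. -/
noncomputable def edgeIdeal (K : Type) [Field K] {V : Type} (G : SimpleGraph V) :
    Ideal (MvPolynomial V K) :=
  Ideal.span {m | ∃ i j, G.Adj i j ∧ m = X i * X j}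

/-- A finite set of edges of `G` forming a matching (pairwise vertex-disjoint edges). -/
def IsMatchingSet {V : Type} (G : SimpleGraph V) (M : Finset (Sym2 V)) : Prop :=
  (↑M ⊆ G.edgeSet) ∧ ∀ e ∈ M, ∀ f ∈ M, e ≠ f → ∀ v, v ∈ e → v ∉ f

/-- The vertex set of a set of edges. -/
def matchVerts {V : Type} (M : Finset (Sym2 V)) : Set V := {v | ∃ e ∈ M, v ∈ e}

/-- The matching number of `G`. -/
noncomputable def matchNum {V : Type} (G : SimpleGraph V) : ℕ :=
  sSup {k | ∃ M : Finset (Sym2 V), IsMatchingSet G M ∧ M.card = k}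

/-- A graph is chordal if it has no induced cycle of length `≥ 4`. -/
def IsChordal {V : Type} (G : SimpleGraph V) : Prop :=
  ∀ m : ℕ, 4 ≤ m → ∀ v : ZMod m → V, Function.Injective v →
    ¬ (∀ i j : ZMod m, G.Adj (v i) (v j) ↔ (j = i + 1 ∨ i = j + 1))

/-- `v` is a cut vertex of the connected graph `G`:
removing it disconnects the graph. -/
def IsCutVertex {V : Type} (G : SimpleGraph V) (v : V) : Prop :=
  G.Connected ∧ ¬ (G.induce {u | u ≠ v}).Connected

/-- `G` has no isolated vertices. -/
def NoIsolated {V : Type} (G : SimpleGraph V) : Prop := ∀ v, ∃ u, G.Adj v u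

/-- The faces of the clique complex `Δ(G)` having exactly `d` vertices. -/
def cliqueFace {V : Type} (G : SimpleGraph V) (d : ℕ) : Type :=
  {F : Finset V // G.IsClique ↑F ∧ F.card = d}

/-- The space of (augmented) simplicial `(d-1)`-chains of the clique complex of `G`
with coefficients in `K`: the free `K`-module on the faces with `d` vertices.
(In particular the `0`-th chain space is spanned by the empty face, so this chain
complex computes *reduced* (co)homology.) -/
def cliqueChain (K : Type) [Field K] {V : Type} (G : SimpleGraph V) (d : ℕ) : Type :=
  cliqueFace G d →₀ K

noncomputable instance (K : Type) [Field K] {V : Type} (G : SimpleGraph V) (d : ℕ) :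
    AddCommGroup (cliqueChain K G d) := Finsupp.instAddCommGroup

noncomputable instance (K : Type) [Field K] {V : Type} (G : SimpleGraph V) (d : ℕ) :
    Module K (cliqueChain K G d) := Finsupp.module _ _

/-- The simplicial boundary map of the clique complex of `G`. -/
noncomputable def cliqueBoundary (K : Type) [Field K] {V : Type} [LinearOrder V]
    (G : SimpleGraph V) (d : ℕ) :
    cliqueChain K G (d + 1) →ₗ[K] cliqueChain K G d :=
  Finsupp.lift (cliqueChain K G d) K (cliqueFace G (d + 1)) (fun F =>
    ∑ j : Fin (d + 1), ((-1 : K) ^ (j : ℕ)) •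
      ((Finsupp.single (⟨F.1.erase ((F.1.orderIsoOfFin F.2.2 j : F.1) : V),
        ⟨F.2.1.subset (by exact_mod_cast Finset.erase_subset _ _), by
          rw [Finset.card_erase_of_mem (F.1.orderIsoOfFin F.2.2 j).2, F.2.2]; omega⟩⟩
          -- card (d+1) - 1 = d
           :
            cliqueFace G d) 1) : cliqueChain K G d))

/-- The `i`-th reduced simplicial homology of the clique complex of `G`,
with coefficients in `K`. -/
noncomputable abbrev cliqueReducedHomology (K : Type) [Field K] {V : Type} [LinearOrder V]
    (G : SimpleGraph V) (i : ℕ) :=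
  ↥(LinearMap.ker (cliqueBoundary K G i)) ⧸
    (Submodule.comap (LinearMap.ker (cliqueBoundary K G i)).subtype
      (LinearMap.range (cliqueBoundary K G (i + 1))))

/-- The space of simplicial `(d-1)`-cochains: the dual of the chain space. -/
def cliqueCochain (K : Type) [Field K] {V : Type} (G : SimpleGraph V) (d : ℕ) : Type :=
  Module.Dual K (cliqueChain K G d)

noncomputable instance (K : Type) [Field K] {V : Type} (G : SimpleGraph V) (d : ℕ) :
    AddCommGroup (cliqueCochain K G d) := LinearMap.addCommGroup

noncomputable instance (K : Type) [Field K] {V : Type} (G : SimpleGraph V) (d : ℕ) :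
    Module K (cliqueCochain K G d) :=
  inferInstanceAs (Module K (Module.Dual K (cliqueChain K G d)))

/-- The simplicial coboundary map of the clique complex of `G`. -/
noncomputable def cliqueCoboundary (K : Type) [Field K] {V : Type} [LinearOrder V]
    (G : SimpleGraph V) (d : ℕ) :
    cliqueCochain K G d →ₗ[K] cliqueCochain K G (d + 1) :=
  (cliqueBoundary K G d).dualMap

/-- The `i`-th reduced simplicial cohomology of the clique complex of `G`,
with coefficients in `K`, defined via the dual (cochain) complex. -/
noncomputable abbrev cliqueReducedCohomology (K : Type) [Field K] {V : Type} [LinearOrder V]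
    (G : SimpleGraph V) (i : ℕ) :=
  ↥(LinearMap.ker (cliqueCoboundary K G (i + 1))) ⧸
    (Submodule.comap (LinearMap.ker (cliqueCoboundary K G (i + 1))).subtype
      (LinearMap.range (cliqueCoboundary K G i)))

/-- The incidence sign `(-1) ^ #{u ∈ F | u < v}` of the vertex `v` relative to `F`. -/
noncomputable def vertexSign (K : Type) [Field K] {V : Type} [LinearOrder V]
    (v : V) (F : Finset V) : K :=
  (-1) ^ (F.filter (· < v)).card

section CliqueChains

variable {K : Type} [Field K] {V : Type}

/-- `IsCliqueChain G W d z` says that the chain `z` is supported on cliques of `G`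
with `d` vertices, all contained in `W`. -/
def IsCliqueChain (G : SimpleGraph V) (W : Finset V) (d : ℕ) (z : Finset V → K) : Prop :=
  ∀ F, z F ≠ 0 → F ⊆ W ∧ G.IsClique ↑F ∧ F.card = d

lemma IsCliqueChain.sub {G : SimpleGraph V} {W : Finset V} {d : ℕ} {y z : Finset V → K}
    (hy : IsCliqueChain G W d y) (hz : IsCliqueChain G W d z) :
    IsCliqueChain G W d (y - z) := by
  intro F hF
  by_cases h : y F = 0
  · exact hz F fun h' => hF (by simp [h, h'])
  · exact hy F h

lemma IsCliqueChain.add {G : SimpleGraph V} {W : Finset V} {d : ℕ} {y z : Finset V → K}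
    (hy : IsCliqueChain G W d y) (hz : IsCliqueChain G W d z) :
    IsCliqueChain G W d (y + z) := by
  intro F hF
  by_cases h : y F = 0
  · exact hz F fun h' => hF (by simp [h, h'])
  · exact hy F h

end CliqueChains

section FinsetChains

variable {K : Type} [Field K] {V : Type} [LinearOrder V]

lemma vertexSign_insert {u v : V} {F : Finset V} (hu : u ∉ F) :
    vertexSign K v (insert u F) =
      if u < v then -vertexSign K v F else vertexSign K v F := by
  unfold vertexSign
  rw [Finset.filter_insert]
  split_ifs with h
  · rw [Finset.card_insert_of_notMem (by simp [hu]), pow_succ]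
    ring
  · rfl

lemma vertexSign_mul_self (v : V) (F : Finset V) :
    vertexSign K v F * vertexSign K v F = 1 := by
  unfold vertexSign
  rw [← mul_pow]
  simp

lemma vertexSign_mul_vertexSign_insert {u v : V} {F : Finset V} (huv : u ≠ v) (hu : u ∉ F)
    (hv : v ∉ F) :
    vertexSign K u F * vertexSign K v (insert u F) =
      -(vertexSign K v F * vertexSign K u (insert v F)) := by
  rw [vertexSign_insert hu, vertexSign_insert hv]
  rcases lt_or_gt_of_ne huv with h | h
  · rw [if_pos h, if_neg h.not_gt]
    ring
  · rw [if_neg h.not_gt, if_pos h]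
    ring

variable [Fintype V]

/-- The boundary map on chains of the full simplex on `V`, a chain being represented by
its coefficient function. -/
noncomputable def simplexBoundary (z : Finset V → K) (F : Finset V) : K :=
  ∑ v ∈ Fᶜ, vertexSign K v F * z (insert v F)

/-- The cone operator with apex `w` on chains of the full simplex on `V`. -/
noncomputable def simplexCone (w : V) (z : Finset V → K) (F : Finset V) : K :=
  if w ∈ F then vertexSign K w F * z (F.erase w) else 0

lemma simplexBoundary_add (y z : Finset V → K) :
    simplexBoundary (y + z) = simplexBoundary y + simplexBoundary z := by
  funext F
  simp [simplexBoundary, mul_add, Finset.sum_add_distrib]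

lemma simplexBoundary_sub (y z : Finset V → K) :
    simplexBoundary (y - z) = simplexBoundary y - simplexBoundary z := by
  funext F
  simp [simplexBoundary, mul_sub, Finset.sum_sub_distrib]

lemma simplexBoundary_smul (c : K) (z : Finset V → K) :
    simplexBoundary (c • z) = c • simplexBoundary z := by
  funext F
  simp [simplexBoundary, Finset.mul_sum, mul_left_comm]

lemma simplexBoundary_simplexBoundary (z : Finset V → K) :
    simplexBoundary (simplexBoundary z) = 0 := by
  funext F
  simp only [simplexBoundary, Finset.mul_sum, Pi.zero_apply]
  rw [Finset.sum_sigma']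
  refine Finset.sum_involution (fun p _ => ⟨p.2, p.1⟩) ?_ ?_ ?_ ?_
  · rintro ⟨u, v⟩ h
    simp only [Finset.mem_sigma, Finset.mem_compl, Finset.mem_insert, not_or] at h
    obtain ⟨hu, hvu, hv⟩ := h
    simp only [← mul_assoc]
    rw [vertexSign_mul_vertexSign_insert (Ne.symm hvu) hu hv, Finset.insert_comm]
    ring
  · rintro ⟨u, v⟩ h - he
    simp only [Finset.mem_sigma, Finset.mem_compl, Finset.mem_insert, not_or] at h
    simp only [Sigma.mk.injEq] at he
    exact h.2.1 he.1
  · rintro ⟨u, v⟩ h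
    simp only [Finset.mem_sigma, Finset.mem_compl, Finset.mem_insert, not_or] at h ⊢
    exact ⟨h.2.2, Ne.symm h.2.1, h.1⟩
  · rintro ⟨u, v⟩ _
    rfl

lemma simplexBoundary_simplexCone (w : V) (z : Finset V → K) (F : Finset V) :
    simplexBoundary (simplexCone w z) F = z F - simplexCone w (simplexBoundary z) F := by
  by_cases hw : w ∈ F
  · obtain ⟨H, hH, rfl⟩ : ∃ H, w ∉ H ∧ insert w H = F :=
      ⟨F.erase w, by simp, Finset.insert_erase hw⟩
    have hc : (insert w H)ᶜ = Hᶜ.erase w := by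
      ext a
      simp
    simp only [simplexCone, Finset.mem_insert_self, if_true, Finset.erase_insert hH]
    rw [simplexBoundary, simplexBoundary, hc,
      ← Finset.add_sum_erase Hᶜ _ (Finset.mem_compl.2 hH), mul_add, ← mul_assoc,
      vertexSign_insert hH, if_neg (lt_irrefl w), vertexSign_mul_self, one_mul,
      sub_add_cancel_left, Finset.mul_sum, ← Finset.sum_neg_distrib]
    refine Finset.sum_congr rfl fun u hu => ?_
    simp only [Finset.mem_erase, Finset.mem_compl] at hu
    have e : (insert u (insert w H)).erase w = insert u H := by
      rw [Finset.insert_comm, Finset.erase_insert (by simp [hH, Ne.symm hu.1])]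
    rw [simplexCone, if_pos (by simp), e, ← mul_assoc, ← mul_assoc, ← neg_mul]
    congr 1
    rw [Finset.insert_comm, vertexSign_insert (v := w) (u := w) (by simp [hH, Ne.symm hu.1]),
      if_neg (lt_irrefl w), mul_comm, vertexSign_insert hH, vertexSign_insert hu.2]
    rcases lt_or_gt_of_ne hu.1 with h | h
    · rw [if_pos h, if_neg h.not_gt]
      ring
    · rw [if_neg h.not_gt, if_pos h]
      ring
  · rw [simplexBoundary, Finset.sum_eq_single w]
    · simp only [simplexCone, Finset.mem_insert_self, if_true, Finset.erase_insert hw, hw,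
        if_false]
      rw [vertexSign_insert hw, if_neg (lt_irrefl w), ← mul_assoc, vertexSign_mul_self]
      ring
    · intro u _ hu
      simp [simplexCone, hw, Ne.symm hu]
    · intro h
      simp [hw] at h

lemma IsCliqueChain.simplexBoundary {G : SimpleGraph V} {W : Finset V} {d : ℕ}
    {z : Finset V → K} (hz : IsCliqueChain G W (d + 1) z) :
    IsCliqueChain G W d (simplexBoundary z) := by
  intro F hF
  obtain ⟨v, hv, hne⟩ := Finset.exists_ne_zero_of_sum_ne_zero hF
  obtain ⟨h1, h2, h3⟩ := hz _ (right_ne_zero_of_mul hne)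
  rw [Finset.card_insert_of_notMem (Finset.mem_compl.1 hv)] at h3
  exact ⟨(Finset.subset_insert _ _).trans h1,
    h2.subset (by exact_mod_cast Finset.subset_insert _ _), by omega⟩

/-- `v` is a simplicial vertex of the subgraph of `G` induced on `W`. -/
def IsSimplicialIn (G : SimpleGraph V) (W : Finset V) (v : V) : Prop :=
  v ∈ W ∧ ∀ a ∈ W, ∀ b ∈ W, G.Adj v a → G.Adj v b → a ≠ b → G.Adj a b

/-- If every nonempty set of vertices has a simplicial vertex, then every cycle of
positive dimension is a boundary. -/
lemma exists_simplexBoundary_eq (G : SimpleGraph V)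
    (hG : ∀ W : Finset V, W.Nonempty → ∃ v, IsSimplicialIn G W v) (d : ℕ) (hd : 2 ≤ d)
    (W : Finset V) (z : Finset V → K) (hz : IsCliqueChain G W d z)
    (hcycle : simplexBoundary z = 0) :
    ∃ y, IsCliqueChain G W (d + 1) y ∧ simplexBoundary y = z := by
  induction W using Finset.strongInduction generalizing z with
  | H W ih =>
  have mono : ∀ {v : V} {y : Finset V → K} {e : ℕ}, IsCliqueChain G (W.erase v) e y →
      IsCliqueChain G W e y := fun h F hF =>
    ⟨(h F hF).1.trans (Finset.erase_subset _ _), (h F hF).2⟩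
  rcases W.eq_empty_or_nonempty with rfl | hW
  · have hz0 : z = 0 := by
      funext F
      by_contra h
      obtain ⟨h1, -, h3⟩ := hz F h
      rw [Finset.subset_empty.1 h1, Finset.card_empty] at h3
      omega
    refine ⟨0, fun F hF => absurd rfl hF, ?_⟩
    funext F
    simp [simplexBoundary, hz0]
  obtain ⟨v, hvW, hv⟩ := hG W hW
  by_cases hN : ∃ w ∈ W, G.Adj v w
  · obtain ⟨w, hwW, hvw⟩ := hN
    set z₁ : Finset V → K := fun F => if v ∈ F then z F else 0 with hz₁
    have hy₁ : IsCliqueChain G W (d + 1) (simplexCone w z₁) := by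
      intro F hF
      have hwF : w ∈ F := by
        by_contra h
        simp [simplexCone, h] at hF
      have hne : z₁ (F.erase w) ≠ 0 := by
        rw [simplexCone, if_pos hwF] at hF
        exact right_ne_zero_of_mul hF
      have hvF : v ∈ F.erase w := by
        by_contra h
        simp only [hz₁, h, if_false, ne_eq, not_true_eq_false] at hne
      simp only [hz₁, hvF, if_true] at hne
      obtain ⟨h1, h2, h3⟩ := hz _ hne
      rw [← Finset.insert_erase hwF]
      refine ⟨Finset.insert_subset hwW h1, ?_, ?_⟩
      · rw [Finset.coe_insert]
        refine h2.insert fun b hb hwb => ?_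
        rcases eq_or_ne v b with rfl | hvb
        · exact hvw.symm
        · exact hv w hwW b (h1 hb) hvw (h2 hvF hb hvb) hwb
      · rw [Finset.card_insert_of_notMem (by simp), h3]
    have hz' : IsCliqueChain G (W.erase v) d (z - simplexBoundary (simplexCone w z₁)) := by
      intro F hF
      obtain ⟨h1, h2⟩ := hz.sub hy₁.simplexBoundary F hF
      refine ⟨Finset.subset_erase.2 ⟨h1, fun hvF => hF ?_⟩, h2⟩
      have hb : ∀ H, v ∈ H → simplexBoundary z₁ H = 0 := by
        intro H hH
        refine Eq.trans ?_ (congrFun hcycle H)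
        refine Finset.sum_congr rfl fun u _ => ?_
        rw [hz₁]
        simp [hH]
      rw [Pi.sub_apply, simplexBoundary_simplexCone]
      have hz1F : z₁ F = z F := by simp [hz₁, hvF]
      rw [hz1F, simplexCone]
      split_ifs with hwF
      · rw [hb _ (Finset.mem_erase.2 ⟨hvw.ne, hvF⟩)]
        simp
      · simp
    obtain ⟨y, hy, hyz⟩ := ih _ (Finset.erase_ssubset hvW) _ hz'
      (by rw [simplexBoundary_sub, simplexBoundary_simplexBoundary, hcycle, sub_zero])
    exact ⟨y + simplexCone w z₁, (mono hy).add hy₁, by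
      rw [simplexBoundary_add, hyz, sub_add_cancel]⟩
  · have hz' : IsCliqueChain G (W.erase v) d z := by
      intro F hF
      obtain ⟨h1, h2, h3⟩ := hz F hF
      refine ⟨Finset.subset_erase.2 ⟨h1, fun hvF => ?_⟩, h2, h3⟩
      obtain ⟨w, hwF, hwv⟩ := Finset.exists_mem_ne (by omega : 1 < F.card) v
      exact hN ⟨w, h1 hwF, h2 hvF hwF hwv.symm⟩
    obtain ⟨y, hy, hyz⟩ := ih _ (Finset.erase_ssubset hvW) _ hz' hcycle
    exact ⟨y, mono hy, hyz⟩

end FinsetChains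

section Chordal

variable {V : Type}

/-- In a chordal graph, two neighbours of `x` joined by a path whose interior avoids the
closed neighbourhood of `x` are adjacent. -/
lemma IsChordal.adj_of_path {G : SimpleGraph V} (hch : IsChordal G) {x s t : V}
    (hxs : G.Adj x s) (hxt : G.Adj x t) (hst : s ≠ t)
    (hpath : ∃ n : ℕ, ∃ f : ℕ → V, f 0 = s ∧ f n = t ∧ (∀ i < n, G.Adj (f i) (f (i + 1))) ∧
      ∀ i, 0 < i → i < n → f i ≠ x ∧ ¬ G.Adj x (f i)) : G.Adj s t := by
  classical
  by_contra hnadj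
  set n := Nat.find hpath with hn
  obtain ⟨f, hf0, hfn, hadj, hint⟩ := Nat.find_spec hpath
  rw [← hn] at hfn hadj hint
  have hmin : ∀ m < n, ¬ _ := fun m hm => Nat.find_min hpath hm
  have hn0 : n ≠ 0 := by
    intro h
    rw [h, hf0] at hfn
    exact hst hfn
  have hn1 : n ≠ 1 := by
    intro h
    have := hadj 0 (by omega)
    rw [hf0, zero_add, ← h, hfn] at this
    exact hnadj this
  have hinj : ∀ i j, i < j → j ≤ n → f i ≠ f j := by
    intro i j hij hj he
    refine hmin (n - (j - i)) (by omega)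
      ⟨fun k => if k ≤ i then f k else f (k + (j - i)), by simp [hf0], ?_, ?_, ?_⟩
    · dsimp only
      split_ifs with h
      · obtain rfl : j = n := by omega
        rw [show n - (n - i) = i by omega, he, hfn]
      · rw [show n - (j - i) + (j - i) = n by omega, hfn]
    · intro k hk
      dsimp only
      rcases lt_trichotomy k i with h | rfl | h
      · rw [if_pos h.le, if_pos (by omega)]
        exact hadj k (by omega)
      · rw [if_pos le_rfl, if_neg (by omega), he, show k + 1 + (j - k) = j + 1 by omega]
        exact hadj j (by omega)
      · rw [if_neg (by omega), if_neg (by omega), add_right_comm]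
        exact hadj _ (by omega)
    · intro k hk0 hk
      dsimp only
      split_ifs
      · exact hint _ hk0 (by omega)
      · exact hint _ (by omega) (by omega)
  have hchord : ∀ i j, i + 1 < j → j ≤ n → ¬ G.Adj (f i) (f j) := by
    intro i j hij hj he
    refine hmin (n - (j - i - 1)) (by omega)
      ⟨fun k => if k ≤ i then f k else f (k + (j - i - 1)), by simp [hf0], ?_, ?_, ?_⟩
    · dsimp only
      rw [if_neg (by omega), show n - (j - i - 1) + (j - i - 1) = n by omega, hfn]
    · intro k hk
      dsimp only
      rcases lt_trichotomy k i with h | rfl | h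
      · rw [if_pos h.le, if_pos (by omega)]
        exact hadj k (by omega)
      · rw [if_pos le_rfl, if_neg (by omega), show k + 1 + (j - k - 1) = j by omega]
        exact he
      · rw [if_neg (by omega), if_neg (by omega), add_right_comm]
        exact hadj _ (by omega)
    · intro k hk0 hk
      dsimp only
      split_ifs
      · exact hint _ hk0 (by omega)
      · exact hint _ (by omega) (by omega)
  have hfx : ∀ i ≤ n, f i ≠ x := by
    intro i hi
    rcases Nat.eq_zero_or_pos i with rfl | h0
    · rw [hf0]
      exact hxs.ne'
    rcases hi.eq_or_lt with rfl | h1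
    · rw [hfn]
      exact hxt.ne'
    · exact (hint i h0 h1).1
  have hxadj : ∀ i ≤ n, G.Adj x (f i) ↔ i = 0 ∨ i = n := by
    intro i hi
    constructor
    · intro h
      by_contra hc
      exact (hint i (by omega) (by omega)).2 h
    · rintro (rfl | h)
      · rwa [hf0]
      · rwa [h, hfn]
  have hfadj : ∀ i j, i ≤ n → j ≤ n → (G.Adj (f i) (f j) ↔ j = i + 1 ∨ i = j + 1) := by
    intro i j hi hj
    constructor
    · intro h
      by_contra hc
      rcases lt_trichotomy i j with hij | rfl | hij
      · exact hchord i j (by omega) hj h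
      · exact G.loopless.irrefl _ h
      · exact hchord j i (by omega) hi h.symm
    · rintro (rfl | rfl)
      · exact hadj i (by omega)
      · exact (hadj j (by omega)).symm
  have hsucc : ∀ i j : Fin (n + 2), j = i + 1 ↔
      (j : ℕ) = i + 1 ∨ ((i : ℕ) = n + 1 ∧ (j : ℕ) = 0) := by
    intro i j
    rw [Fin.ext_iff, Fin.val_add_one]
    have := j.2
    have := i.2
    split_ifs with h
    · have hi : (i : ℕ) = n + 1 := congrArg Fin.val h
      omega
    · have : (i : ℕ) ≠ n + 1 := fun h' => h (Fin.ext h')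
      omega
  refine hch (n + 2) (by omega)
    (fun i : Fin (n + 2) => if (i : ℕ) = n + 1 then x else f i) ?_ ?_
  · intro (i : Fin (n + 2)) (j : Fin (n + 2)) h
    have hi := i.2
    have hj := j.2
    refine Fin.ext ?_
    beta_reduce at h
    split_ifs at h with h1 h2 h2
    · omega
    · exact absurd h.symm (hfx _ (by omega))
    · exact absurd h (hfx _ (by omega))
    · by_contra hne
      rcases lt_or_gt_of_ne hne with hlt | hlt
      · exact hinj _ _ hlt (by omega) h
      · exact hinj _ _ hlt (by omega) h.symm
  · intro (i : Fin (n + 2)) (j : Fin (n + 2))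
    have hi := i.2
    have hj := j.2
    refine Iff.trans ?_ (or_congr (hsucc i j) (hsucc j i)).symm
    split_ifs with h1 h2 h2
    · simp only [SimpleGraph.irrefl, false_iff]
      omega
    · rw [hxadj _ (by omega)]
      omega
    · rw [G.adj_comm, hxadj _ (by omega)]
      omega
    · rw [hfadj _ _ (by omega) (by omega)]
      omega

/-- In a chordal graph, two neighbours of `x` that are attached to the same component of
the non-neighbours of `x` are adjacent. -/
lemma IsChordal.adj_of_reachable {G : SimpleGraph V} (hch : IsChordal G) {x s t : V}
    (hxs : G.Adj x s) (hxt : G.Adj x t) (hst : s ≠ t) {A : Set V}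
    (hA : ∀ a ∈ A, a ≠ x ∧ ¬ G.Adj x a) {c d : A} (hcd : (G.induce A).Reachable c d)
    (hsc : G.Adj s c) (htd : G.Adj t d) : G.Adj s t := by
  obtain ⟨p⟩ := hcd
  refine hch.adj_of_path hxs hxt hst ⟨p.length + 2, fun k =>
    if k = 0 then s else if k ≤ p.length + 1 then (p.getVert (k - 1) : V) else t,
    by simp, by simp, ?_, ?_⟩
  · intro k hk
    dsimp only
    rcases Nat.eq_zero_or_pos k with rfl | h0
    · simpa using hsc
    rw [if_neg (by omega), if_pos (by omega), if_neg (by omega)]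
    split_ifs with h
    · have := p.adj_getVert_succ (i := k - 1) (by omega)
      rw [show k + 1 - 1 = k - 1 + 1 by omega]
      exact this
    · rw [show k - 1 = p.length by omega, p.getVert_length]
      exact htd.symm
  · intro k h0 hk
    dsimp only
    rw [if_neg (by omega), if_pos (by omega)]
    exact hA _ (p.getVert (k - 1)).2

variable [Fintype V] [LinearOrder V]

/-- Dirac: in a chordal graph, a vertex that is not adjacent to all others has a simplicial
vertex among its non-neighbours. -/
lemma IsChordal.exists_isSimplicialIn_not_adj {G : SimpleGraph V} (hch : IsChordal G)
    (W : Finset V) {x z : V} (hx : x ∈ W) (hz : z ∈ W) (hzx : z ≠ x) (hxz : ¬ G.Adj x z) :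
    ∃ y, IsSimplicialIn G W y ∧ y ≠ x ∧ ¬ G.Adj x y := by
  classical
  induction W using Finset.strongInduction generalizing x z with
  | H W ih =>
  set A : Set V := {a | a ∈ W ∧ a ≠ x ∧ ¬ G.Adj x a} with hA
  let z' : A := ⟨z, hz, hzx, hxz⟩
  set C : Set V := {c | ∃ h : c ∈ A, (G.induce A).Reachable z' ⟨c, h⟩} with hC
  set S : Set V := {s | s ∈ W ∧ G.Adj x s ∧ ∃ c ∈ C, G.Adj s c} with hS
  have hzC : z ∈ C := ⟨z'.2, SimpleGraph.Reachable.refl _⟩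
  have hclosed : ∀ c ∈ C, ∀ b ∈ W, G.Adj c b → b ∈ C ∨ b ∈ S := by
    rintro c ⟨hcA, hc⟩ b hb hcb
    by_cases hxb : G.Adj x b
    · exact Or.inr ⟨hb, hxb, c, ⟨hcA, hc⟩, hcb.symm⟩
    · have hbA : b ∈ A := ⟨hb, fun h => hcA.2.2 (h ▸ hcb.symm), hxb⟩
      have hadj : (G.induce A).Adj ⟨c, hcA⟩ ⟨b, hbA⟩ := hcb
      exact Or.inl ⟨hbA, hc.trans hadj.reachable⟩
  have hSclique : ∀ s ∈ S, ∀ t ∈ S, s ≠ t → G.Adj s t := by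
    rintro s ⟨-, hxs, c, ⟨hcA, hc⟩, hsc⟩ t ⟨-, hxt, d, ⟨hdA, hd⟩, htd⟩ hst
    exact hch.adj_of_reachable hxs hxt hst (A := A) (fun a ha => ha.2)
      (hc.symm.trans hd) hsc htd
  set H : Finset V := W.filter (fun a => a ∈ C ∨ a ∈ S) with hH
  have hCH : ∀ c ∈ C, c ∈ H := fun c hc => Finset.mem_filter.2 ⟨hc.1.1, Or.inl hc⟩
  have hHW : H ⊂ W := by
    refine Finset.ssubset_iff_subset_ne.2 ⟨Finset.filter_subset _ _, fun h => ?_⟩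
    rw [← h] at hx
    rcases (Finset.mem_filter.1 hx).2 with h' | h'
    · exact h'.1.2.1 rfl
    · exact G.loopless.irrefl _ h'.2.1
  have hlift : ∀ y ∈ C, IsSimplicialIn G H y →
      ∃ y, IsSimplicialIn G W y ∧ y ≠ x ∧ ¬ G.Adj x y := by
    intro y hyC hy
    refine ⟨y, ⟨hyC.1.1, fun a ha b hb hya hyb hab => ?_⟩, hyC.1.2⟩
    exact hy.2 a (Finset.mem_filter.2 ⟨ha, hclosed y hyC a ha hya⟩)
      b (Finset.mem_filter.2 ⟨hb, hclosed y hyC b hb hyb⟩) hya hyb hab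
  by_cases hcomplete : ∀ a ∈ H, ∀ b ∈ H, a ≠ b → G.Adj a b
  · exact hlift z hzC ⟨hCH z hzC, fun a ha b hb _ _ => hcomplete a ha b hb⟩
  by_cases hSuniv : ∀ s ∈ S, ∀ b ∈ H, b ≠ s → G.Adj s b
  · push Not at hcomplete
    obtain ⟨a, ha, b, hb, hab, hnadj⟩ := hcomplete
    obtain ⟨y, hy, hya, hay⟩ := ih H hHW ha hb hab.symm hnadj
    rcases (Finset.mem_filter.1 hy.1).2 with h | h
    · exact hlift y h hy
    · exact absurd (hSuniv y h a ha hya.symm).symm hay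
  · push Not at hSuniv
    obtain ⟨s, hs, b, hb, hbs, hnadj⟩ := hSuniv
    obtain ⟨y, hy, hys, hsy⟩ :=
      ih H hHW (Finset.mem_filter.2 ⟨hs.1, Or.inr hs⟩) hb hbs hnadj
    rcases (Finset.mem_filter.1 hy.1).2 with h | h
    · exact hlift y h hy
    · exact absurd (hSclique s hs y h hys.symm) hsy

lemma IsChordal.exists_isSimplicialIn {G : SimpleGraph V} (hch : IsChordal G)
    (W : Finset V) (hW : W.Nonempty) : ∃ v, IsSimplicialIn G W v := by
  by_cases h : ∀ a ∈ W, ∀ b ∈ W, a ≠ b → G.Adj a b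
  · obtain ⟨v, hv⟩ := hW
    exact ⟨v, hv, fun a ha b hb _ _ => h a ha b hb⟩
  · push Not at h
    obtain ⟨a, ha, b, hb, hab, hnadj⟩ := h
    obtain ⟨y, hy, -⟩ := hch.exists_isSimplicialIn_not_adj W ha hb hab.symm hnadj
    exact ⟨y, hy⟩

end Chordal

section Comparison

variable {K : Type} [Field K] {V : Type}

/-- The basis chain of the clique complex given by a face. -/
noncomputable def cliqueChainSingle (K : Type) [Field K] {G : SimpleGraph V} {d : ℕ}
    (F : cliqueFace G d) : cliqueChain K G d :=
  Finsupp.single F 1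

lemma cliqueChain_induction {G : SimpleGraph V} {d : ℕ} {p : cliqueChain K G d → Prop}
    (zero : p 0) (add : ∀ y z, p y → p z → p (y + z))
    (smul_single : ∀ (c : K) F, p (c • cliqueChainSingle K F)) (z : cliqueChain K G d) :
    p z := by
  refine Finsupp.induction_linear (motive := p) z zero add fun F c => ?_
  have h := smul_single c F
  have e : c • cliqueChainSingle K F = (Finsupp.single F c : cliqueFace G d →₀ K) :=
    Finsupp.smul_single_one F c
  rwa [e] at h

open Classical in
/-- The coefficient function of a chain of the clique complex, extended by zero to all
finite sets of vertices. -/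
noncomputable def cliqueCoeff {G : SimpleGraph V} {d : ℕ} (z : cliqueChain K G d) :
    Finset V → K :=
  fun F => if h : G.IsClique ↑F ∧ F.card = d then DFunLike.coe (F := cliqueFace G d →₀ K) z ⟨F, h⟩ else 0

lemma cliqueCoeff_add {G : SimpleGraph V} {d : ℕ} (y z : cliqueChain K G d) :
    cliqueCoeff (y + z) = cliqueCoeff y + cliqueCoeff z := by
  funext F
  simp only [cliqueCoeff, Pi.add_apply]
  split_ifs
  · rfl
  · simp

lemma cliqueCoeff_smul {G : SimpleGraph V} {d : ℕ} (c : K) (z : cliqueChain K G d) :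
    cliqueCoeff (c • z) = c • cliqueCoeff z := by
  funext F
  simp only [cliqueCoeff, Pi.smul_apply]
  split_ifs
  · rfl
  · simp

lemma cliqueCoeff_zero {G : SimpleGraph V} {d : ℕ} :
    cliqueCoeff (0 : cliqueChain K G d) = 0 := by
  simpa using cliqueCoeff_smul (0 : K) (0 : cliqueChain K G d)

lemma cliqueCoeff_sum {G : SimpleGraph V} {d : ℕ} {ι : Type} (s : Finset ι)
    (z : ι → cliqueChain K G d) :
    cliqueCoeff (∑ j ∈ s, z j) = ∑ j ∈ s, cliqueCoeff (z j) := by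
  classical
  induction s using Finset.induction_on with
  | empty => simp [cliqueCoeff_zero]
  | insert a s ha ih => rw [Finset.sum_insert ha, Finset.sum_insert ha, cliqueCoeff_add, ih]

lemma cliqueCoeff_single [DecidableEq V] {G : SimpleGraph V} {d : ℕ} (F : cliqueFace G d) (H : Finset V) :
    cliqueCoeff (cliqueChainSingle K F) H = if F.1 = H then 1 else 0 := by
  classical
  unfold cliqueCoeff
  split_ifs with h1 h2 h2
  · subst h2
    exact Finsupp.single_eq_same (M := K)
  · exact Finsupp.single_eq_of_ne (M := K) fun h => h2 (congrArg Subtype.val h).symm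
  · subst h2
    exact absurd F.2 h1
  · rfl

lemma cliqueCoeff_injective {G : SimpleGraph V} {d : ℕ} {y z : cliqueChain K G d}
    (h : cliqueCoeff y = cliqueCoeff z) : y = z := by
  refine Finsupp.ext fun F => ?_
  have := congrFun h F.1
  simp only [cliqueCoeff] at this
  rw [dif_pos F.2, dif_pos F.2] at this
  exact this

lemma exists_cliqueCoeff_eq [Fintype V] {G : SimpleGraph V} {W : Finset V} {d : ℕ}
    {z : Finset V → K} (hz : IsCliqueChain G W d z) :
    ∃ y : cliqueChain K G d, cliqueCoeff y = z := by
  classical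
  have : Finite (cliqueFace G d) := Subtype.finite
  refine ⟨Finsupp.equivFunOnFinite.symm fun F : cliqueFace G d => z F.1, funext fun F => ?_⟩
  unfold cliqueCoeff
  split_ifs with h
  · rfl
  · by_contra hne
    exact h (hz F (Ne.symm hne)).2

lemma isCliqueChain_cliqueCoeff [Fintype V] {G : SimpleGraph V} {d : ℕ}
    (z : cliqueChain K G d) : IsCliqueChain G Finset.univ d (cliqueCoeff z) := by
  classical
  intro F hF
  by_contra h
  refine hF (dif_neg fun h' => h ⟨Finset.subset_univ _, h'⟩)

variable [LinearOrder V]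

/-- The face obtained by deleting the `j`-th vertex. -/
def cliqueFace.deleteNth {G : SimpleGraph V} {d : ℕ} (F : cliqueFace G (d + 1))
    (j : Fin (d + 1)) : cliqueFace G d :=
  ⟨F.1.erase (F.1.orderIsoOfFin F.2.2 j),
    F.2.1.subset (by exact_mod_cast Finset.erase_subset _ _), by
      rw [Finset.card_erase_of_mem (F.1.orderIsoOfFin F.2.2 j).2, F.2.2]; omega⟩

lemma cliqueBoundary_single {G : SimpleGraph V} {d : ℕ} (F : cliqueFace G (d + 1)) :
    cliqueBoundary K G d (cliqueChainSingle K F) =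
      ∑ j : Fin (d + 1), ((-1 : K) ^ (j : ℕ)) • cliqueChainSingle K (F.deleteNth j) := by
  have h := Finsupp.sum_single_index (a := F) (b := (1 : K))
    (h := fun F c => c • ∑ j : Fin (d + 1), ((-1 : K) ^ (j : ℕ)) •
      cliqueChainSingle K (F.deleteNth j)) (zero_smul K _)
  exact h.trans (one_smul K _)

lemma vertexSign_orderIsoOfFin {F : Finset V} {d : ℕ} (hF : F.card = d) (j : Fin d) :
    vertexSign K (F.orderIsoOfFin hF j : V) F = (-1) ^ (j : ℕ) := by
  unfold vertexSign
  congr 1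
  have : F.filter (· < (F.orderIsoOfFin hF j : V)) =
      (Finset.Iio j).map (F.orderEmbOfFin hF).toEmbedding := by
    ext a
    simp only [Finset.mem_filter, Finset.mem_map, Finset.mem_Iio]
    constructor
    · rintro ⟨ha, hlt⟩
      refine ⟨(F.orderIsoOfFin hF).symm ⟨a, ha⟩, ?_, ?_⟩
      · rw [← (F.orderIsoOfFin hF).lt_iff_lt, OrderIso.apply_symm_apply]
        exact hlt
      · simp [← Finset.coe_orderIsoOfFin_apply]
    · rintro ⟨k, hk, rfl⟩
      refine ⟨Finset.orderEmbOfFin_mem _ _ _, ?_⟩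
      simpa using hk
  rw [this, Finset.card_map, Fin.card_Iio]

lemma cliqueCoeff_cliqueBoundary [Fintype V] {G : SimpleGraph V} {d : ℕ}
    (z : cliqueChain K G (d + 1)) :
    cliqueCoeff (cliqueBoundary K G d z) = simplexBoundary (cliqueCoeff z) := by
  classical
  induction z using cliqueChain_induction with
  | zero =>
    rw [map_zero, cliqueCoeff_zero, cliqueCoeff_zero]
    funext H
    simp [simplexBoundary]
  | add y z hy hz =>
    rw [map_add, cliqueCoeff_add, hy, hz, cliqueCoeff_add, simplexBoundary_add]
  | smul_single c F =>
    rw [map_smul, cliqueCoeff_smul, cliqueCoeff_smul, simplexBoundary_smul]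
    congr 1
    rw [cliqueBoundary_single, cliqueCoeff_sum]
    funext H
    rw [Finset.sum_apply]
    simp only [cliqueCoeff_smul, Pi.smul_apply, cliqueCoeff_single, smul_eq_mul]
    have e1 : ∀ j : Fin (d + 1), (-1 : K) ^ (j : ℕ) *
        (if (F.deleteNth j).1 = H then 1 else 0) =
        (fun v : F.1 => vertexSign K (v : V) F.1 * if F.1.erase v = H then 1 else 0)
          (F.1.orderIsoOfFin F.2.2 j) := by
      intro j
      simp only [vertexSign_orderIsoOfFin]
      rfl
    refine (Finset.sum_congr rfl fun j _ => e1 j).trans ?_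
    refine (Equiv.sum_comp (F.1.orderIsoOfFin F.2.2).toEquiv
      (fun v : F.1 => vertexSign K (v : V) F.1 * if F.1.erase v = H then 1 else 0)).trans ?_
    refine (Finset.sum_coe_sort F.1
      (fun v => vertexSign K v F.1 * if F.1.erase v = H then 1 else 0)).trans ?_
    simp only [simplexBoundary, cliqueCoeff_single, mul_ite, mul_one, mul_zero,
      ← Finset.sum_filter]
    refine Finset.sum_congr ?_ ?_
    · ext v
      simp only [Finset.mem_filter, Finset.mem_compl]
      constructor
      · rintro ⟨hv, rfl⟩
        simp [Finset.insert_erase hv]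
      · rintro ⟨hv, h⟩
        rw [h]
        simp [hv]
    · intro v hv
      simp only [Finset.mem_filter, Finset.mem_compl] at hv
      rw [hv.2, vertexSign_insert hv.1, if_neg (lt_irrefl v)]

end Comparison

lemma IsChordal.ker_cliqueBoundary_le_range (K : Type) [Field K] {V : Type} [Fintype V]
    [LinearOrder V] {G : SimpleGraph V} (hch : IsChordal G) {i : ℕ} (hi : i ≠ 0) :
    LinearMap.ker (cliqueBoundary K G i) ≤ LinearMap.range (cliqueBoundary K G (i + 1)) := by
  intro z hz
  obtain ⟨y, hy, hyz⟩ := exists_simplexBoundary_eq G hch.exists_isSimplicialIn (i + 1)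
    (by omega) Finset.univ (cliqueCoeff z) (isCliqueChain_cliqueCoeff z)
    (by rw [← cliqueCoeff_cliqueBoundary, LinearMap.mem_ker.1 hz, cliqueCoeff_zero])
  obtain ⟨y, rfl⟩ := exists_cliqueCoeff_eq hy
  exact ⟨y, cliqueCoeff_injective (by rw [cliqueCoeff_cliqueBoundary, hyz])⟩

/-- **Lemma 3.2.** If `G` is a chordal finite simple graph, then the reduced simplicial
homology and cohomology of its clique complex `Δ(G)` with coefficients in any field `K`
vanish in every degree `i ≠ 0`. -/
theorem chordal_clique_complex_reduced_homology_vanishes (K : Type) [Field K]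
    {V : Type} [Fintype V] [LinearOrder V] (G : SimpleGraph V) (hch : IsChordal G) :
    ∀ i : ℕ, i ≠ 0 →
      Subsingleton (cliqueReducedHomology K G i) ∧
      Subsingleton (cliqueReducedCohomology K G i) := by
  intro i hi
  have hker := hch.ker_cliqueBoundary_le_range K hi
  constructor
  · rw [Submodule.Quotient.subsingleton_iff, Submodule.comap_subtype_eq_top]
    exact hker
  · rw [Submodule.Quotient.subsingleton_iff, Submodule.comap_subtype_eq_top]
    intro φ hφ
    have hann : φ ∈ (LinearMap.ker (cliqueBoundary K G i)).dualAnnihilator := by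
      refine (Submodule.mem_dualAnnihilator _).2 fun w hw => ?_
      obtain ⟨y, rfl⟩ := hker hw
      have hzero : (cliqueBoundary K G (i + 1)).dualMap φ = 0 := hφ
      exact LinearMap.congr_fun hzero y
    rw [← LinearMap.range_dualMap_eq_dualAnnihilator_ker] at hann
    exact hann
end

section
/- For any given positive integers s < m and any field K, there exists a finite simple graph G with no isolated vertices and matching number ν(G) = m such that g_{I(G)}(k) = 0 if and only if k ∈ {s+1,…,m}. -/
open MvPolynomial

/-- The squarefree monomial `∏ i ∈ F, xᵢ`. -/
noncomputable def sqMon (K : Type) [Field K] {σ : Type} (F : Finset σ) :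
    MvPolynomial σ K := ∏ i ∈ F, X i

/-- `I` is a squarefree monomial ideal if it is generated by squarefree monomials. -/
def IsSqfreeMonomialIdeal (K : Type) [Field K] {σ : Type}
    (I : Ideal (MvPolynomial σ K)) : Prop :=
  ∃ 𝒢 : Set (Finset σ), I = Ideal.span ((sqMon K) '' 𝒢)

/-- The `k`-th squarefree power `I^[k]`: the ideal generated by all squarefree
monomials belonging to `I^k`. -/
noncomputable def sqfreePower (K : Type) [Field K] {σ : Type}
    (I : Ideal (MvPolynomial σ K)) (k : ℕ) : Ideal (MvPolynomial σ K) :=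
  Ideal.span {m | ∃ F : Finset σ, m = sqMon K F ∧ m ∈ I ^ k}

/-- The monomial grade `ν(I)`: the largest `k` with `I^[k] ≠ (0)`. -/
noncomputable def monGrade (K : Type) [Field K] {σ : Type}
    (I : Ideal (MvPolynomial σ K)) : ℕ :=
  sSup {k | sqfreePower K I k ≠ ⊥}

/-- The initial degree of a squarefree monomial ideal: the least degree of a
(squarefree) monomial belonging to it. -/
noncomputable def indeg (K : Type) [Field K] {σ : Type}
    (I : Ideal (MvPolynomial σ K)) : ℕ :=
  sInf {d | ∃ F : Finset σ, F.card = d ∧ sqMon K F ∈ I}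

/-- The depth of `S/I` over the polynomial ring `S`: the longest length of a
regular sequence on `S/I` consisting of elements of the irrelevant maximal ideal. -/
noncomputable def polyDepth (K : Type) [Field K] {σ : Type}
    (I : Ideal (MvPolynomial σ K)) : ℕ :=
  sSup {k | ∃ rs : List (MvPolynomial σ K), rs.length = k ∧
    (∀ r ∈ rs, r ∈ Ideal.span (Set.range (X : σ → MvPolynomial σ K))) ∧
    RingTheory.Sequence.IsRegular (MvPolynomial σ K ⧸ I) rs}

/-- The normalized depth function `g_I(k) = depth(S/I^[k]) - (indeg(I^[k]) - 1)`. -/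
noncomputable def nDepth (K : Type) [Field K] {σ : Type}
    (I : Ideal (MvPolynomial σ K)) (k : ℕ) : ℤ :=
  (polyDepth K (sqfreePower K I k) : ℤ) - ((indeg K (sqfreePower K I k) : ℤ) - 1)

open MvPolynomial

/-- `rs` is a weakly regular sequence modulo `I`, phrased inside the ring. -/
def RegularModulo {R : Type} [CommRing R] : Ideal R → List R → Prop
  | _, [] => True
  | I, b :: rs => (∀ f, b * f ∈ I → f ∈ I) ∧ RegularModulo (I ⊔ Ideal.span {b}) rs

namespace RegularModulo

variable {R : Type} [CommRing R]

lemma append_iff (rs ss : List R) (I : Ideal R) :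
    RegularModulo I (rs ++ ss) ↔ RegularModulo I rs ∧ RegularModulo (I ⊔ Ideal.ofList rs) ss := by
  induction rs generalizing I with
  | nil => simp [RegularModulo]
  | cons b rs ih =>
    simp only [List.cons_append, RegularModulo, ih, Ideal.ofList_cons, sup_assoc, and_assoc]

lemma top (rs : List R) : RegularModulo (⊤ : Ideal R) rs := by
  induction rs with
  | nil => trivial
  | cons b rs ih => exact ⟨fun _ _ => trivial, by simpa using ih⟩

/-- Regularity modulo `I` follows from regularity modulo `I : f` and modulo `I + (f)`. -/
lemma of_colon (f : R) (rs : List R) (I J : Ideal R) (hJ : ∀ g, g ∈ J ↔ f * g ∈ I)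
    (h₁ : RegularModulo J rs) (h₂ : RegularModulo (I ⊔ Ideal.span {f}) rs) :
    RegularModulo I rs := by
  induction rs generalizing I J with
  | nil => trivial
  | cons b rs ih =>
    obtain ⟨h₁b, h₁⟩ := h₁
    obtain ⟨h₂b, h₂⟩ := h₂
    refine ⟨fun g hg => ?_, ih (I ⊔ Ideal.span {b}) (J ⊔ Ideal.span {b}) (fun g => ?_) h₁ ?_⟩
    · obtain ⟨i, hi, y, hy, rfl⟩ := Submodule.mem_sup.mp (h₂b g (Ideal.mem_sup_left hg))
      obtain ⟨c, rfl⟩ := Ideal.mem_span_singleton'.mp hy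
      have : f * c ∈ I := by
        refine (hJ c).mp (h₁b c ((hJ _).mpr ?_))
        have := I.sub_mem hg (I.mul_mem_left b hi)
        convert this using 1; ring
      exact I.add_mem hi (by rwa [mul_comm c f])
    · constructor
      · intro hg
        obtain ⟨j, hj, y, hy, rfl⟩ := Submodule.mem_sup.mp hg
        rw [mul_add]
        exact Submodule.add_mem_sup ((hJ j).mp hj) (Ideal.mul_mem_left _ _ hy)
      · intro hg
        obtain ⟨i, hi, y, hy, hiy⟩ := Submodule.mem_sup.mp hg
        obtain ⟨c, rfl⟩ := Ideal.mem_span_singleton'.mp hy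
        have hc : c ∈ I ⊔ Ideal.span {f} := by
          refine h₂b c ?_
          have : b * c = f * g - i := by rw [← hiy]; ring
          rw [this]
          exact Ideal.sub_mem _ (Ideal.mem_sup_right (Ideal.mul_mem_right _ _
            (Ideal.mem_span_singleton_self f))) (Ideal.mem_sup_left hi)
        obtain ⟨i', hi', z, hz, rfl⟩ := Submodule.mem_sup.mp hc
        obtain ⟨h, rfl⟩ := Ideal.mem_span_singleton'.mp hz
        have : g - b * h ∈ J := by
          rw [hJ]
          have e : f * (g - b * h) = i + i' * b := by rw [mul_sub, ← hiy]; ring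
          rw [e]
          exact I.add_mem hi (I.mul_mem_right _ hi')
        rw [← sub_add_cancel g (b * h)]
        exact Submodule.add_mem_sup this (Ideal.mul_mem_right _ _ (Ideal.mem_span_singleton_self b))
    · rwa [sup_right_comm]

lemma mk_mem_smul_top_iff (I J : Ideal R) (f : R) :
    (Ideal.Quotient.mk I f) ∈ (J • ⊤ : Submodule R (R ⧸ I)) ↔ f ∈ I ⊔ J := by
  have h : (J • ⊤ : Submodule R (R ⧸ I)) = Submodule.map (Submodule.mkQ I) J := by
    have := Submodule.map_smul'' J (⊤ : Submodule R R) (Submodule.mkQ I)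
    rw [Submodule.map_top, Submodule.range_mkQ] at this
    rw [← this]
    simp
  rw [h, ← Submodule.comap_map_mkQ I J]
  rfl

lemma iff_forall_getElem (rs : List R) (I : Ideal R) : RegularModulo I rs ↔
    ∀ i (h : i < rs.length), ∀ f, rs[i] * f ∈ I ⊔ Ideal.ofList (rs.take i) →
      f ∈ I ⊔ Ideal.ofList (rs.take i) := by
  induction rs generalizing I with
  | nil => simp [RegularModulo]
  | cons b rs ih =>
    rw [RegularModulo, ih]
    constructor
    · rintro ⟨h0, h⟩ i hi
      cases i with
      | zero => simpa using h0
      | succ i =>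
        have := h i (by simpa using hi)
        simpa [sup_assoc] using this
    · intro h
      refine ⟨fun f hf => by simpa using h 0 (by simp) f (by simpa using hf), fun i hi => ?_⟩
      have := h (i + 1) (by simpa using hi)
      simpa [sup_assoc] using this

lemma iff_isWeaklyRegular (I : Ideal R) (rs : List R) :
    RegularModulo I rs ↔ RingTheory.Sequence.IsWeaklyRegular (R ⧸ I) rs := by
  rw [iff_forall_getElem, RingTheory.Sequence.isWeaklyRegular_iff]
  refine forall₂_congr fun i hi => ?_
  rw [isSMulRegular_iff_right_eq_zero_of_smul]
  rw [(Submodule.mkQ_surjective _).forall, (Ideal.Quotient.mk_surjective).forall]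
  refine forall_congr' fun f => ?_
  rw [← map_smul, Submodule.mkQ_apply, Submodule.mkQ_apply, Submodule.Quotient.mk_eq_zero,
    Submodule.Quotient.mk_eq_zero, mk_mem_smul_top_iff, ← mk_mem_smul_top_iff]
  rfl

lemma isRegular_iff (I : Ideal R) (rs : List R) :
    RingTheory.Sequence.IsRegular (R ⧸ I) rs ↔
      RegularModulo I rs ∧ I ⊔ Ideal.ofList rs ≠ ⊤ := by
  rw [RingTheory.Sequence.isRegular_iff, iff_isWeaklyRegular]
  refine and_congr_right fun _ => not_congr ?_
  rw [Ideal.eq_top_iff_one, ← mk_mem_smul_top_iff, eq_comm, Submodule.eq_top_iff']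
  refine ⟨fun h => h _, fun h x => ?_⟩
  obtain ⟨f, rfl⟩ := Ideal.Quotient.mk_surjective x
  rw [← mul_one f, map_mul]
  exact Submodule.smul_mem _ f h

end RegularModulo

/-- If `Q = I : f` lies in the maximal ideal `𝔪` and `r ∈ 𝔪` is regular modulo `I`, then some
colon ideal of `I + (r)` lies in `𝔪` and contains `Q + (r)`. -/
lemma exists_colon_le_of_regular {R : Type} [CommRing R] [IsNoetherianRing R] (𝔪 : Ideal R)
    [h𝔪 : 𝔪.IsMaximal] (I Q : Ideal R) (f r : R) (hQ : ∀ g, g ∈ Q ↔ f * g ∈ I) (hQm : Q ≤ 𝔪)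
    (hr : r ∈ 𝔪) (hreg : ∀ g, r * g ∈ I → g ∈ I) :
    ∃ (f' : R) (Q' : Ideal R), (∀ g, g ∈ Q' ↔ f' * g ∈ I ⊔ Ideal.span {r}) ∧ Q' ≤ 𝔪 ∧
      Q ⊔ Ideal.span {r} ≤ Q' := by
  let N : Ideal R := I.colon Q
  have hN : ∀ x, x ∈ N ↔ ∀ q ∈ Q, x * q ∈ I := fun x => by
    simp [N, Submodule.mem_colon]
  have hfN : f ∈ N := (hN f).mpr fun q hq => (hQ q).mp hq
  by_contra hcon
  push Not at hcon
  have key : ∀ x ∈ N, ∃ u, u ∉ 𝔪 ∧ x * u ∈ I ⊔ Ideal.span {r} := by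
    intro x hx
    have hmem : ∀ g, g ∈ (I ⊔ Ideal.span {r}).colon {x} ↔ x * g ∈ I ⊔ Ideal.span {r} := fun g => by
      rw [Submodule.mem_colon_singleton, smul_eq_mul, mul_comm]
    have h := hcon x ((I ⊔ Ideal.span {r}).colon {x}) hmem
    by_contra! hx'
    refine h (fun u hu => ?_) (sup_le (fun q hq => ?_) ?_)
    · by_contra hu'
      exact hx' u hu' ((hmem u).mp hu)
    · exact (hmem q).mpr (Ideal.mem_sup_left ((hN x).mp hx q hq))
    · rw [Ideal.span_singleton_le_iff_mem, hmem]
      exact Ideal.mem_sup_right (Ideal.mul_mem_left _ _ (Ideal.mem_span_singleton_self r))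
  have hle : N ≤ I ⊔ 𝔪 • N := by
    intro x hx
    obtain ⟨u, hu, hxu⟩ := key x hx
    obtain ⟨v, w, hw, hvw⟩ := h𝔪.exists_inv hu
    obtain ⟨i, hi, y, hy, hiy⟩ := Submodule.mem_sup.mp hxu
    obtain ⟨c, rfl⟩ := Ideal.mem_span_singleton'.mp hy
    have hcN : c ∈ N := by
      rw [hN]
      intro q hq
      refine hreg _ ?_
      have : r * (c * q) = u * (x * q) - q * i := by
        linear_combination q * hiy
      rw [this]
      exact I.sub_mem (I.mul_mem_left _ ((hN x).mp hx q hq)) (I.mul_mem_left _ hi)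
    have : x = v * i + ((v * r) • c + w • x) := by
      simp only [smul_eq_mul]
      linear_combination (-x) * hvw - v * hiy
    rw [this]
    exact Submodule.add_mem_sup (I.mul_mem_left _ hi) (add_mem
      (Submodule.smul_mem_smul (𝔪.mul_mem_left _ hr) hcN) (Submodule.smul_mem_smul hw hx))
  obtain ⟨t, ht, htN⟩ := Submodule.exists_sub_one_mem_and_smul_le_of_fg_of_le_sup
    (IsNoetherian.noetherian N) le_rfl hle
  have htf : t * f ∈ I := htN (Submodule.smul_mem_pointwise_smul f t N hfN)
  have htm : t ∈ 𝔪 := hQm ((hQ t).mpr (by rwa [mul_comm]))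
  exact h𝔪.ne_top ((Ideal.eq_top_iff_one _).mpr (by simpa using 𝔪.sub_mem htm ht))

/-- A regular sequence modulo `I` in a maximal ideal `𝔪` is no longer than the dimension of
`R ⧸ (I : f)`, for any `f` with `I : f ⊆ 𝔪`. -/
lemma RegularModulo.length_le_ringKrullDim {R : Type} [CommRing R] [IsNoetherianRing R]
    (𝔪 : Ideal R) [h𝔪 : 𝔪.IsMaximal] (rs : List R) (I Q : Ideal R) (f : R)
    (hQ : ∀ g, g ∈ Q ↔ f * g ∈ I) (hQm : Q ≤ 𝔪) (hrs : ∀ r ∈ rs, r ∈ 𝔪)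
    (h : RegularModulo I rs) : (rs.length : WithBot ℕ∞) ≤ ringKrullDim (R ⧸ Q) := by
  induction rs generalizing I Q f with
  | nil =>
    have : Nontrivial (R ⧸ Q) := Ideal.Quotient.nontrivial_iff.mpr
      (fun hQ => h𝔪.ne_top (top_le_iff.mp (hQ ▸ hQm)))
    simpa using ringKrullDim_nonneg_of_nontrivial
  | cons r rs ih =>
    obtain ⟨hr, h⟩ := h
    obtain ⟨f', Q', hQ', hQm', hle⟩ := exists_colon_le_of_regular 𝔪 I Q f r hQ hQm
      (hrs r (by simp)) hr
    have h1 := ih _ Q' f' hQ' hQm' (fun x hx => hrs x (by simp [hx])) h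
    have hnzd : Ideal.Quotient.mk Q r ∈ nonZeroDivisors (R ⧸ Q) := by
      rw [mem_nonZeroDivisors_iff_right]
      intro x hx
      obtain ⟨x, rfl⟩ := Ideal.Quotient.mk_surjective x
      rw [← map_mul, Ideal.Quotient.eq_zero_iff_mem, hQ] at hx
      rw [Ideal.Quotient.eq_zero_iff_mem, hQ]
      exact hr _ (by convert hx using 1; ring)
    have h2 := ringKrullDim_succ_le_of_surjective
      (Ideal.Quotient.factor (le_sup_left.trans hle)) (Ideal.Quotient.factor_surjective _) hnzd
      (by
        rw [Ideal.Quotient.factor_mk, Ideal.Quotient.eq_zero_iff_mem]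
        exact hle (Ideal.mem_sup_right (Ideal.mem_span_singleton_self r)))
    refine le_trans ?_ h2
    push_cast [List.length_cons]
    gcongr

/-- The ideal of polynomials all of whose monomials have support in the upward closed
family `𝓕`. -/
noncomputable def supportIdeal (K : Type) [Field K] {σ : Type} (𝓕 : UpperSet (Finset σ)) :
    Ideal (MvPolynomial σ K) :=
  restrictSupportIdeal K {α | α.support ∈ 𝓕}
    fun _ _ h hα => 𝓕.upper (Finsupp.support_mono h) hα

/-- The family of finite sets not contained in `U`. -/
def notSubset {σ : Type} (U : Finset σ) : UpperSet (Finset σ) where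
  carrier := {F | ¬ F ⊆ U}
  upper' _ _ h hF hF' := hF (h.trans hF')

section SupportIdeal

variable {K : Type} [Field K] {σ : Type}

lemma mem_supportIdeal {𝓕 : UpperSet (Finset σ)} {f : MvPolynomial σ K} :
    f ∈ supportIdeal K 𝓕 ↔ ∀ α ∈ f.support, α.support ∈ 𝓕 := Iff.rfl

lemma mem_notSubset {U F : Finset σ} : F ∈ notSubset U ↔ ¬ F ⊆ U := Iff.rfl

lemma supportIdeal_eq_top {𝓕 : UpperSet (Finset σ)} (h : ∅ ∈ 𝓕) : supportIdeal K 𝓕 = ⊤ :=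
  (Ideal.eq_top_iff_one _).mpr (mem_supportIdeal.mpr fun _ _ => 𝓕.upper (Finset.empty_subset _) h)

lemma supportIdeal_le_idealOfVars {𝓕 : UpperSet (Finset σ)} (h : ∅ ∉ 𝓕) :
    supportIdeal K 𝓕 ≤ idealOfVars σ K := by
  intro f hf
  rw [idealOfVars, ← Set.image_univ, mem_ideal_span_X_image]
  intro α hα
  by_contra! hα'
  refine h ?_
  have h0 : α = 0 := by ext i; exact hα' i trivial
  simpa [h0] using mem_supportIdeal.mp hf α hα

lemma supportIdeal_isHomogeneous (𝓕 : UpperSet (Finset σ)) (f : MvPolynomial σ K)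
    (hf : f ∈ supportIdeal K 𝓕) (n : ℕ) : homogeneousComponent n f ∈ supportIdeal K 𝓕 := by
  classical
  refine mem_supportIdeal.mpr fun α hα => mem_supportIdeal.mp hf α ?_
  refine mem_support_iff.mpr fun h0 => mem_support_iff.mp hα ?_
  rw [coeff_homogeneousComponent, h0, ite_self]

lemma sqMon_eq_monomial (F : Finset σ) :
    sqMon K F = monomial (∑ i ∈ F, Finsupp.single i 1) 1 := by
  rw [monomial_sum_one]
  rfl

variable [DecidableEq σ]

lemma support_single_add (v : σ) (α : σ →₀ ℕ) :
    (Finsupp.single v 1 + α).support = insert v α.support := by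
  ext i
  by_cases h : i = v
  · simp [h]
  · simp [h]

lemma X_mul_mem_supportIdeal {𝓕 : UpperSet (Finset σ)} {v : σ} {f : MvPolynomial σ K} :
    X v * f ∈ supportIdeal K 𝓕 ↔ ∀ α ∈ f.support, insert v α.support ∈ 𝓕 := by
  simp [mem_supportIdeal, support_single_add]

lemma sqMon_mul_mem_supportIdeal {𝓕 : UpperSet (Finset σ)} {F : Finset σ} {f : MvPolynomial σ K} :
    sqMon K F * f ∈ supportIdeal K 𝓕 ↔ ∀ α ∈ f.support, F ∪ α.support ∈ 𝓕 := by
  induction F using Finset.induction_on generalizing f with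
  | empty => simp [sqMon, mem_supportIdeal]
  | insert v F hv ih =>
    have h : sqMon K (insert v F) * f = sqMon K F * (X v * f) := by
      rw [sqMon, Finset.prod_insert hv, sqMon]; ring
    rw [h, ih]
    simp [support_single_add, Finset.insert_union, Finset.union_insert]

lemma sqMon_mem_supportIdeal {𝓕 : UpperSet (Finset σ)} {F : Finset σ} :
    sqMon K F ∈ supportIdeal K 𝓕 ↔ F ∈ 𝓕 := by
  rw [← mul_one (sqMon K F), sqMon_mul_mem_supportIdeal]
  have : (1 : MvPolynomial σ K).support = {0} := by
    ext α
    rw [mem_support_iff, coeff_one, Finset.mem_singleton, ite_ne_right_iff, eq_comm]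
    simp
  simp [this]

lemma span_sqMon_eq_supportIdeal (𝓕 : UpperSet (Finset σ)) :
    Ideal.span {p | ∃ F, p = sqMon K F ∧ F ∈ 𝓕} = supportIdeal K 𝓕 := by
  apply le_antisymm
  · rw [Ideal.span_le]
    rintro _ ⟨F, rfl, hF⟩
    exact sqMon_mem_supportIdeal.mpr hF
  · intro f hf
    rw [f.as_sum]
    refine Ideal.sum_mem _ fun α hα => ?_
    have hle : (∑ i ∈ α.support, Finsupp.single i 1) ≤ α := by
      intro i
      by_cases hi : i ∈ α.support
      · rw [Finsupp.finsetSum_apply]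
        simp only [Finsupp.single_apply, Finset.sum_ite_eq', hi, if_true]
        exact Nat.one_le_iff_ne_zero.mpr (Finsupp.mem_support_iff.mp hi)
      · rw [Finsupp.finsetSum_apply]
        simp [Finsupp.single_apply, Finset.sum_ite_eq', hi]
    have h1 : sqMon K α.support = monomial (∑ i ∈ α.support, Finsupp.single i 1) 1 := by
      rw [monomial_sum_one]; rfl
    have h2 : sqMon K α.support ∣ monomial α (coeff α f) := by
      rw [h1, monomial_dvd_monomial]
      exact ⟨Or.inr hle, one_dvd _⟩
    exact Ideal.mem_of_dvd _ h2 (Ideal.subset_span ⟨_, rfl, mem_supportIdeal.mp hf α hα⟩)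

lemma supportIdeal_sup_span_X {𝓕 𝓖 : UpperSet (Finset σ)} {v : σ}
    (h : ∀ F, F ∈ 𝓖 ↔ F ∈ 𝓕 ∨ v ∈ F) :
    supportIdeal K 𝓕 ⊔ Ideal.span {X v} = supportIdeal K 𝓖 := by
  apply le_antisymm
  · refine sup_le (fun f hf α hα => (h _).mpr (Or.inl (mem_supportIdeal.mp hf α hα))) ?_
    rw [Ideal.span_singleton_le_iff_mem]
    have : (X v : MvPolynomial σ K) = sqMon K {v} := by simp [sqMon]
    rw [this, sqMon_mem_supportIdeal, h]
    simp
  · rw [← span_sqMon_eq_supportIdeal 𝓖, Ideal.span_le]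
    rintro _ ⟨F, rfl, hF⟩
    rcases (h F).mp hF with hF | hF
    · exact Ideal.mem_sup_left (sqMon_mem_supportIdeal.mpr hF)
    · exact Ideal.mem_sup_right (Ideal.mem_span_singleton.mpr (Finset.dvd_prod_of_mem _ hF))

lemma sqMon_pair {a b : σ} (hab : a ≠ b) : sqMon K {a, b} = X a * X b :=
  Finset.prod_pair hab

end SupportIdeal

section ElementarySymmetric

variable {K : Type} [Field K] {σ : Type}

attribute [local instance] MvPolynomial.gradedAlgebra

lemma homogeneousComponent_mul_add {b g : MvPolynomial σ K} {d : ℕ} (hb : b.IsHomogeneous d)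
    (n : ℕ) : homogeneousComponent (d + n) (b * g) = b * homogeneousComponent n g := by
  have h := DirectSum.coe_decompose_mul_add_of_left_mem (homogeneousSubmodule σ K) (i := d)
    (j := n) (a := b) (b := g) hb
  have hc : ∀ (p : MvPolynomial σ K) (i : ℕ),
      (DirectSum.decompose (homogeneousSubmodule σ K) p i : MvPolynomial σ K) =
        homogeneousComponent i p := decomposition.decompose'_apply
  rwa [hc, hc] at h

/-- An ideal of a polynomial ring closed under taking homogeneous components. -/
def IsComponentClosed (J : Ideal (MvPolynomial σ K)) : Prop :=
  ∀ f ∈ J, ∀ n, homogeneousComponent n f ∈ J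

lemma homogeneousComponent_mul_of_lt {b g : MvPolynomial σ K} {d n : ℕ} (hb : b.IsHomogeneous d)
    (hn : n < d) : homogeneousComponent n (b * g) = 0 := by
  have h := DirectSum.coe_decompose_mul_of_left_mem_of_not_le (homogeneousSubmodule σ K) (i := d)
    (n := n) (a := b) (b := g) hb (by omega)
  have hc : ∀ (p : MvPolynomial σ K) (i : ℕ),
      (DirectSum.decompose (homogeneousSubmodule σ K) p i : MvPolynomial σ K) =
        homogeneousComponent i p := decomposition.decompose'_apply
  rwa [hc] at h

lemma IsComponentClosed.sup_span {J : Ideal (MvPolynomial σ K)} (hJ : IsComponentClosed J)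
    {b : MvPolynomial σ K} {d : ℕ} (hb : b.IsHomogeneous d) :
    IsComponentClosed (J ⊔ Ideal.span {b}) := by
  intro f hf n
  obtain ⟨j, hj, y, hy, rfl⟩ := Submodule.mem_sup.mp hf
  obtain ⟨c, rfl⟩ := Ideal.mem_span_singleton'.mp hy
  rw [map_add, mul_comm]
  refine Submodule.add_mem_sup (hJ j hj n) ?_
  rcases lt_or_ge n d with hn | hn
  · rw [homogeneousComponent_mul_of_lt hb hn]
    exact zero_mem _
  · obtain ⟨e, rfl⟩ := Nat.exists_eq_add_of_le hn
    rw [homogeneousComponent_mul_add hb]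
    exact Ideal.mul_mem_right _ _ (Ideal.mem_span_singleton_self b)

/-- If `b` is regular modulo `J + (x_v)` and `x_v` is regular modulo `J`, then `b` is regular
modulo `J`. -/
lemma regular_of_regular_sup_X {J : Ideal (MvPolynomial σ K)} (hJ : IsComponentClosed J)
    {b : MvPolynomial σ K} {d : ℕ} (hb : b.IsHomogeneous d) {v : σ}
    (hv : ∀ f, X v * f ∈ J → f ∈ J)
    (hbv : ∀ f, b * f ∈ J ⊔ Ideal.span {X v} → f ∈ J ⊔ Ideal.span {X v}) :
    ∀ f, b * f ∈ J → f ∈ J := by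
  have key : ∀ n, ∀ f : MvPolynomial σ K, f.IsHomogeneous n → b * f ∈ J → f ∈ J := by
    intro n
    induction n with
    | zero =>
      intro f hf hbf
      obtain ⟨j, hj, y, hy, hjy⟩ := Submodule.mem_sup.mp (hbv f (Ideal.mem_sup_left hbf))
      obtain ⟨c, rfl⟩ := Ideal.mem_span_singleton'.mp hy
      have h := congrArg (homogeneousComponent 0) hjy
      rw [homogeneousComponent_of_mem hf, if_pos rfl, map_add, mul_comm,
        homogeneousComponent_mul_of_lt (isHomogeneous_X K v) one_pos, add_zero] at h
      exact h ▸ hJ j hj 0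
    | succ n ih =>
      intro f hf hbf
      obtain ⟨j, hj, y, hy, hjy⟩ := Submodule.mem_sup.mp (hbv f (Ideal.mem_sup_left hbf))
      obtain ⟨c, rfl⟩ := Ideal.mem_span_singleton'.mp hy
      have h := congrArg (homogeneousComponent (1 + n)) hjy
      rw [homogeneousComponent_of_mem hf, if_pos (add_comm _ _), map_add, mul_comm c,
        homogeneousComponent_mul_add (isHomogeneous_X K v)] at h
      rw [← h]
      refine J.add_mem (hJ j hj _) (J.mul_mem_left _ (ih _
        (homogeneousComponent_isHomogeneous n c) (hv _ ?_)))
      have e : X v * (b * homogeneousComponent n c) =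
          b * f - b * homogeneousComponent (1 + n) j := by rw [← h]; ring
      rw [e]
      exact J.sub_mem hbf (J.mul_mem_left _ (hJ j hj _))
  intro f hf
  rw [← sum_homogeneousComponent f]
  refine Ideal.sum_mem _ fun n _ => key n _ (homogeneousComponent_isHomogeneous n f) ?_
  rw [← homogeneousComponent_mul_add hb]
  exact hJ _ hf _

/-- A regular sequence of homogeneous elements starting with a variable stays regular when this
variable is moved to the end. -/
lemma RegularModulo.move_X_to_end {v : σ} (rs : List (MvPolynomial σ K))
    (hrs : ∀ r ∈ rs, ∃ d, r.IsHomogeneous d) (J : Ideal (MvPolynomial σ K))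
    (hJ : IsComponentClosed J) (hv : ∀ f, X v * f ∈ J → f ∈ J)
    (h : RegularModulo (J ⊔ Ideal.span {X v}) rs) :
    RegularModulo J rs ∧
      ∀ f, X v * f ∈ J ⊔ Ideal.ofList rs → f ∈ J ⊔ Ideal.ofList rs := by
  induction rs generalizing J with
  | nil => exact ⟨trivial, by simpa using hv⟩
  | cons b rs ih =>
    obtain ⟨hb, h⟩ := h
    obtain ⟨d, hd⟩ := hrs b (by simp)
    have := ih (fun r hr => hrs r (by simp [hr])) (J ⊔ Ideal.span {b}) (hJ.sup_span hd)
      (fun f hf => ?_) (by rwa [sup_right_comm])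
    · refine ⟨⟨regular_of_regular_sup_X hJ hd hv hb, this.1⟩, ?_⟩
      rw [Ideal.ofList_cons, ← sup_assoc]
      exact this.2
    · obtain ⟨j, hj, y, hy, hjy⟩ := Submodule.mem_sup.mp hf
      obtain ⟨c, rfl⟩ := Ideal.mem_span_singleton'.mp hy
      have hc : c ∈ J ⊔ Ideal.span {X v} := by
        refine hb c ?_
        have : b * c = X v * f - j := by rw [← hjy]; ring
        rw [this]
        exact Ideal.sub_mem _ (Ideal.mem_sup_right (Ideal.mul_mem_right _ _
          (Ideal.mem_span_singleton_self _))) (Ideal.mem_sup_left hj)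
      obtain ⟨j', hj', z, hz, rfl⟩ := Submodule.mem_sup.mp hc
      obtain ⟨g, rfl⟩ := Ideal.mem_span_singleton'.mp hz
      have : f - b * g ∈ J := by
        refine hv _ ?_
        have e : X v * (f - b * g) = j + b * j' := by linear_combination -hjy
        rw [e]
        exact J.add_mem hj (J.mul_mem_left _ hj')
      rw [← sub_add_cancel f (b * g)]
      exact Submodule.add_mem_sup this (Ideal.mul_mem_right _ _ (Ideal.mem_span_singleton_self b))

lemma sqMon_regular_of_forall_X {J : Ideal (MvPolynomial σ K)} (U : Finset σ)
    (h : ∀ v ∈ U, ∀ f, X v * f ∈ J → f ∈ J) (f : MvPolynomial σ K) (hf : sqMon K U * f ∈ J) :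
    f ∈ J := by
  classical
  induction U using Finset.induction_on generalizing f with
  | empty => simpa [sqMon] using hf
  | insert v U hv ih =>
    rw [sqMon, Finset.prod_insert hv, mul_assoc] at hf
    exact ih (fun w hw => h w (by simp [hw])) f (h v (by simp) _ hf)

variable [Fintype σ]

lemma esymm_isHomogeneous (n : ℕ) : (esymm σ K n).IsHomogeneous n := by
  refine IsHomogeneous.sum _ _ _ fun t ht => ?_
  have := IsHomogeneous.prod t (fun i => (X i : MvPolynomial σ K)) (fun _ => 1)
    fun i _ => isHomogeneous_X K i
  simpa [(Finset.mem_powersetCard.mp ht).2] using this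

variable (K σ) in
/-- The elementary symmetric polynomials of degrees `1, …, d`. -/
noncomputable def esymmList (d : ℕ) : List (MvPolynomial σ K) :=
  (List.range d).map fun i => esymm σ K (i + 1)

lemma esymmList_succ (d : ℕ) :
    esymmList K σ (d + 1) = esymmList K σ d ++ [esymm σ K (d + 1)] := by
  simp [esymmList, List.range_succ]

lemma isHomogeneous_of_mem_esymmList {d : ℕ} {r : MvPolynomial σ K}
    (hr : r ∈ esymmList K σ d) : ∃ d, r.IsHomogeneous d := by
  obtain ⟨i, -, rfl⟩ := List.mem_map.mp hr
  exact ⟨_, esymm_isHomogeneous _⟩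

lemma mem_idealOfVars_of_mem_esymmList {d : ℕ} {r : MvPolynomial σ K}
    (hr : r ∈ esymmList K σ d) : r ∈ idealOfVars σ K := by
  obtain ⟨i, -, rfl⟩ := List.mem_map.mp hr
  refine Ideal.sum_mem _ fun t ht => ?_
  have hne : t.Nonempty := Finset.card_pos.mp (by rw [(Finset.mem_powersetCard.mp ht).2]; omega)
  obtain ⟨v, hv⟩ := hne
  exact Ideal.mem_of_dvd _ (Finset.dvd_prod_of_mem _ hv) (Ideal.subset_span ⟨v, rfl⟩)

variable [DecidableEq σ]

lemma esymm_sub_sqMon_mem (U : Finset σ) :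
    esymm σ K U.card - sqMon K U ∈ supportIdeal K (notSubset U) := by
  have hU : U ∈ Finset.powersetCard U.card (Finset.univ : Finset σ) := by simp
  rw [esymm, ← Finset.add_sum_erase _ _ hU, sqMon, add_sub_cancel_left]
  refine Ideal.sum_mem _ fun t ht => ?_
  obtain ⟨hne, ht⟩ := Finset.mem_erase.mp ht
  refine sqMon_mem_supportIdeal.mpr fun hsub => hne ?_
  exact Finset.eq_of_subset_of_card_le hsub (Finset.mem_powersetCard.mp ht).2.ge

/-- The first `d` elementary symmetric polynomials form a regular sequence on every coordinate
subspace of dimension at least `d`. -/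
lemma RegularModulo.esymmList_notSubset (U : Finset σ) (d : ℕ) (hd : d ≤ U.card) :
    RegularModulo (supportIdeal K (notSubset U)) (esymmList K σ d) := by
  induction hn : U.card generalizing U d with
  | zero =>
    obtain rfl : d = 0 := by omega
    trivial
  | succ n ih =>
    have hreg : ∀ v ∈ U, ∀ f, X v * f ∈ supportIdeal K (notSubset U) →
        f ∈ supportIdeal K (notSubset U) := by
      intro v hv f hf
      rw [X_mul_mem_supportIdeal] at hf
      refine mem_supportIdeal.mpr fun α hα hsub => hf α hα ?_
      exact Finset.insert_subset hv hsub
    have hdel : ∀ v ∈ U, supportIdeal K (notSubset U) ⊔ Ideal.span {X v} =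
        supportIdeal K (notSubset (U.erase v)) := by
      intro v hv
      refine supportIdeal_sup_span_X fun F => ?_
      rw [mem_notSubset, mem_notSubset, Finset.subset_erase]
      tauto
    have step : ∀ e, e ≤ n → ∀ v ∈ U,
        RegularModulo (supportIdeal K (notSubset U)) (esymmList K σ e) ∧
          ∀ f, X v * f ∈ supportIdeal K (notSubset U) ⊔ Ideal.ofList (esymmList K σ e) →
            f ∈ supportIdeal K (notSubset U) ⊔ Ideal.ofList (esymmList K σ e) := by
      intro e he v hv
      have hc : (U.erase v).card = n := by rw [Finset.card_erase_of_mem hv, hn]; rfl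
      refine RegularModulo.move_X_to_end _ (fun r hr => isHomogeneous_of_mem_esymmList hr) _
        (supportIdeal_isHomogeneous _) (hreg v hv) ?_
      rw [hdel v hv]
      exact ih _ e (by omega) hc
    obtain ⟨v, hv⟩ : U.Nonempty := Finset.card_pos.mp (by omega)
    rcases Nat.lt_or_ge n d with hnd | hnd
    · obtain rfl : d = n + 1 := by omega
      rw [esymmList_succ, RegularModulo.append_iff]
      refine ⟨(step n le_rfl v hv).1, fun f hf => ?_, trivial⟩
      refine sqMon_regular_of_forall_X U (fun w hw => (step n le_rfl w hw).2) f ?_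
      have h := esymm_sub_sqMon_mem (K := K) U
      rw [hn] at h
      have e : sqMon K U * f = esymm σ K (n + 1) * f - (esymm σ K (n + 1) - sqMon K U) * f := by
        ring
      rw [e]
      exact Ideal.sub_mem _ hf (Ideal.mem_sup_left (Ideal.mul_mem_right _ _ h))
    · exact (step d hnd v hv).1

end ElementarySymmetric

/-- A partition of a vertex set into `s` disjoint pairs `{left i, right i}` and a set `clique`. -/
structure PairsAndClique (σ : Type) (s : ℕ) where
  /-- One endpoint of the `i`-th pair. -/
  left : Fin s → σ
  /-- The other endpoint of the `i`-th pair. -/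
  right : Fin s → σ
  /-- The vertices outside the pairs. -/
  clique : Finset σ
  left_injective : Function.Injective left
  right_injective : Function.Injective right
  left_ne_right : ∀ i j, left i ≠ right j
  left_notMem : ∀ i, left i ∉ clique
  right_notMem : ∀ i, right i ∉ clique
  cover : ∀ v, v ∈ clique ∨ ∃ i, v = left i ∨ v = right i

namespace PairsAndClique

variable {σ : Type} [DecidableEq σ] {s : ℕ} (P : PairsAndClique σ s)

/-- The pairs contained in `F`. -/
def pairsIn (F : Finset σ) : Finset (Fin s) := {i | P.left i ∈ F ∧ P.right i ∈ F}

/-- The pairs disjoint from `Z`. -/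
def pairsOff (Z : Finset σ) : Finset (Fin s) := {i | P.left i ∉ Z ∧ P.right i ∉ Z}

/-- The maximal number of disjoint edges inside `F`. -/
def inducedMatchNum (F : Finset σ) : ℕ := (P.pairsIn F).card + (F ∩ P.clique).card / 2

lemma pairsIn_mono {F G : Finset σ} (h : F ⊆ G) : P.pairsIn F ⊆ P.pairsIn G := by
  intro i hi
  simp only [pairsIn, Finset.mem_filter] at hi ⊢
  exact ⟨hi.1, h hi.2.1, h hi.2.2⟩

lemma inducedMatchNum_mono {F G : Finset σ} (h : F ⊆ G) :
    P.inducedMatchNum F ≤ P.inducedMatchNum G :=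
  add_le_add (Finset.card_le_card (P.pairsIn_mono h))
    (Nat.div_le_div_right (Finset.card_le_card (Finset.inter_subset_inter_right h)))

/-- The vertex sets containing at least `k` disjoint edges. -/
def matchFamily (k : ℕ) : UpperSet (Finset σ) where
  carrier := {F | k ≤ P.inducedMatchNum F}
  upper' _ _ h hF := le_trans hF (P.inducedMatchNum_mono h)

lemma mem_matchFamily {k : ℕ} {F : Finset σ} : F ∈ P.matchFamily k ↔ k ≤ P.inducedMatchNum F :=
  Iff.rfl

lemma card_eq (F : Finset σ) : F.card = (Finset.univ.filter fun i => P.left i ∈ F).card +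
    (Finset.univ.filter fun i => P.right i ∈ F).card + (F ∩ P.clique).card := by
  have h : F = (Finset.univ.filter fun i => P.left i ∈ F).image P.left ∪
      (Finset.univ.filter fun i => P.right i ∈ F).image P.right ∪ (F ∩ P.clique) := by
    ext v
    simp only [Finset.mem_union, Finset.mem_image, Finset.mem_filter, Finset.mem_univ, true_and,
      Finset.mem_inter]
    constructor
    · intro hv
      rcases P.cover v with h | ⟨i, rfl | rfl⟩
      · exact Or.inr ⟨hv, h⟩
      · exact Or.inl (Or.inl ⟨i, hv, rfl⟩)
      · exact Or.inl (Or.inr ⟨i, hv, rfl⟩)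
    · rintro ((⟨i, hv, rfl⟩ | ⟨i, hv, rfl⟩) | ⟨hv, -⟩) <;> exact hv
  conv_lhs => rw [h]
  rw [Finset.card_union_of_disjoint, Finset.card_union_of_disjoint,
    Finset.card_image_of_injective _ P.left_injective,
    Finset.card_image_of_injective _ P.right_injective]
  · rw [Finset.disjoint_left]
    intro v hv hw
    obtain ⟨i, -, rfl⟩ := Finset.mem_image.mp hv
    obtain ⟨j, -, h⟩ := Finset.mem_image.mp hw
    exact P.left_ne_right i j h.symm
  · rw [Finset.disjoint_left]
    intro v hv hw
    rcases Finset.mem_union.mp hv with hv | hv <;> obtain ⟨i, -, rfl⟩ := Finset.mem_image.mp hv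
    · exact P.left_notMem i (Finset.mem_inter.mp hw).2
    · exact P.right_notMem i (Finset.mem_inter.mp hw).2

lemma two_mul_inducedMatchNum_le_card (F : Finset σ) : 2 * P.inducedMatchNum F ≤ F.card := by
  rw [P.card_eq F, inducedMatchNum]
  have h₁ : (P.pairsIn F).card ≤ (Finset.univ.filter fun i => P.left i ∈ F).card :=
    Finset.card_le_card fun i hi => by simp_all [pairsIn]
  have h₂ : (P.pairsIn F).card ≤ (Finset.univ.filter fun i => P.right i ∈ F).card :=
    Finset.card_le_card fun i hi => by simp_all [pairsIn]
  omega

lemma pairsOff_insert_of_mem_clique {t : σ} (ht : t ∈ P.clique) (Z : Finset σ) :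
    P.pairsOff (insert t Z) = P.pairsOff Z := by
  ext i
  have h₁ : P.left i ≠ t := fun h => P.left_notMem i (h ▸ ht)
  have h₂ : P.right i ≠ t := fun h => P.right_notMem i (h ▸ ht)
  simp [pairsOff, h₁, h₂]

lemma pairsOff_insert_left {Z : Finset σ} (i : Fin s) :
    P.pairsOff (insert (P.left i) Z) = (P.pairsOff Z).erase i := by
  ext j
  simp [pairsOff, P.left_injective.eq_iff, (P.left_ne_right i j).symm, and_assoc]

lemma pairsOff_insert_right {Z : Finset σ} (i : Fin s) :
    P.pairsOff (insert (P.right i) Z) = (P.pairsOff Z).erase i := by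
  ext j
  simp [pairsOff, P.right_injective.eq_iff, P.left_ne_right j i, and_left_comm]

end PairsAndClique

section Link

/-- The sets meeting `Z`, or belonging to `𝓕` after adding `U`. -/
def UpperSet.link {σ : Type} [DecidableEq σ] (𝓕 : UpperSet (Finset σ)) (U Z : Finset σ) :
    UpperSet (Finset σ) where
  carrier := {F | ¬ Disjoint F Z ∨ F ∪ U ∈ 𝓕}
  upper' _ _ h hF := hF.imp (fun hF hd => hF (Finset.disjoint_of_subset_left h hd))
    fun hF => 𝓕.upper (Finset.union_subset_union_left h) hF

variable {K : Type} [Field K] {σ : Type} [DecidableEq σ] {𝓕 : UpperSet (Finset σ)}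
  {U Z : Finset σ}

lemma mem_link {F : Finset σ} : F ∈ 𝓕.link U Z ↔ ¬ Disjoint F Z ∨ F ∪ U ∈ 𝓕 := Iff.rfl

lemma RegularModulo.link_of_insert {v : σ} (hv : v ∉ Z) (rs : List (MvPolynomial σ K))
    (h₁ : RegularModulo (supportIdeal K (𝓕.link (insert v U) Z)) rs)
    (h₂ : RegularModulo (supportIdeal K (𝓕.link U (insert v Z))) rs) :
    RegularModulo (supportIdeal K (𝓕.link U Z)) rs := by
  refine RegularModulo.of_colon (X v) rs _ _ (fun f => ?_) h₁ ?_
  · rw [X_mul_mem_supportIdeal, mem_supportIdeal]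
    refine forall₂_congr fun α _ => ?_
    simp [mem_link, hv]
  · rw [supportIdeal_sup_span_X (𝓖 := 𝓕.link U (insert v Z))]
    · exact h₂
    · intro F
      by_cases hF : v ∈ F <;> simp [mem_link, hF]

lemma RegularModulo.link_of_mem (hU : U ∈ 𝓕) (rs : List (MvPolynomial σ K)) :
    RegularModulo (supportIdeal K (𝓕.link U Z)) rs := by
  rw [supportIdeal_eq_top]
  · exact RegularModulo.top rs
  · exact Or.inr (by simpa using hU)

lemma RegularModulo.link_of_compl_notMem [Fintype σ] (hZ : Zᶜ ∉ 𝓕) (hUZ : Disjoint U Z) {d : ℕ}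
    (hd : d ≤ Zᶜ.card) :
    RegularModulo (supportIdeal K (𝓕.link U Z)) (esymmList K σ d) := by
  have h : 𝓕.link U Z = notSubset Zᶜ := by
    ext F
    change F ∈ 𝓕.link U Z ↔ F ∈ notSubset Zᶜ
    rw [mem_link, mem_notSubset, Finset.subset_compl_iff_disjoint_right]
    refine or_iff_left_iff_imp.mpr fun hF hd => hZ (𝓕.upper ?_ hF)
    exact Finset.subset_compl_iff_disjoint_right.mpr (Finset.disjoint_union_left.mpr ⟨hd, hUZ⟩)
  rw [h]
  exact RegularModulo.esymmList_notSubset _ d hd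

end Link

namespace PairsAndClique

variable {K : Type} [Field K] {σ : Type} [Fintype σ] [DecidableEq σ] {s : ℕ}
  (P : PairsAndClique σ s)

lemma card_univ_eq : Fintype.card σ = 2 * s + P.clique.card := by
  rw [← Finset.card_univ, P.card_eq Finset.univ]
  simp [two_mul]

lemma inducedMatchNum_compl (Z : Finset σ) :
    P.inducedMatchNum Zᶜ = (P.pairsOff Z).card + (P.clique \ Z).card / 2 := by
  have h₁ : P.pairsIn Zᶜ = P.pairsOff Z := by simp [pairsIn, pairsOff]
  have h₂ : Zᶜ ∩ P.clique = P.clique \ Z := by ext; simp [and_comm]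
  rw [inducedMatchNum, h₁, h₂]

lemma regular_of_clique_undecided {k d : ℕ}
    (hd : ∀ e, e ≤ s → e < k → d + e ≤ 2 * k - 1 + s) (T U Z : Finset σ)
    (hT : T ⊆ P.clique) (hTU : Disjoint T U) (hTZ : Disjoint T Z) (hUZ : Disjoint U Z)
    (hcover : P.clique ⊆ T ∪ U ∪ Z) (hU : (P.pairsOff Z).card ≤ (P.pairsIn U).card)
    (hZ : Z.card + (P.clique \ Z).card + (P.pairsOff Z).card = s + P.clique.card)
    (hk : 2 * k ≤ (P.clique \ Z).card + 1 + 2 * (P.pairsOff Z).card) :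
    RegularModulo (supportIdeal K ((P.matchFamily k).link U Z)) (esymmList K σ d) := by
  induction T using Finset.induction_on generalizing U Z with
  | empty =>
    have hsub : P.clique \ Z ⊆ U ∩ P.clique := by
      intro t ht
      obtain ⟨ht, htZ⟩ := Finset.mem_sdiff.mp ht
      have := hcover ht
      simp_all
    have := Finset.card_le_card hsub
    rcases hk.eq_or_lt with hk | hk
    · refine RegularModulo.link_of_compl_notMem ?_ hUZ ?_
      · rw [mem_matchFamily, inducedMatchNum_compl]
        omega
      · rw [Finset.card_compl, P.card_univ_eq]
        have := hd (P.pairsOff Z).card (by simpa using Finset.card_le_univ (P.pairsOff Z))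
        omega
    · refine RegularModulo.link_of_mem ?_ _
      rw [mem_matchFamily, inducedMatchNum]
      omega
  | insert t T htT ih =>
    rcases hk.eq_or_lt with hk | hk
    · refine RegularModulo.link_of_compl_notMem ?_ hUZ ?_
      · rw [mem_matchFamily, inducedMatchNum_compl]
        omega
      · rw [Finset.card_compl, P.card_univ_eq]
        have := hd (P.pairsOff Z).card (by simpa using Finset.card_le_univ (P.pairsOff Z))
        omega
    · have ht : t ∈ P.clique := hT (by simp)
      rw [Finset.disjoint_insert_left] at hTU hTZ
      have hsub : T ⊆ P.clique := (Finset.subset_insert _ _).trans hT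
      refine RegularModulo.link_of_insert hTZ.1 _ ?_ ?_
      · refine ih (insert t U) Z hsub ?_ hTZ.2 ?_ ?_ ?_ hZ hk.le
        · exact Finset.disjoint_insert_right.mpr ⟨htT, hTU.2⟩
        · exact Finset.disjoint_insert_left.mpr ⟨hTZ.1, hUZ⟩
        · refine hcover.trans fun v => ?_
          simp only [Finset.mem_union, Finset.mem_insert]
          tauto
        · exact hU.trans (Finset.card_le_card (P.pairsIn_mono (Finset.subset_insert _ _)))
      · have hc : (P.clique \ insert t Z).card + 1 = (P.clique \ Z).card := by
          rw [Finset.sdiff_insert]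
          exact Finset.card_erase_add_one (Finset.mem_sdiff.mpr ⟨ht, hTZ.1⟩)
        refine ih U (insert t Z) hsub hTU.2 ?_ ?_ ?_ ?_ ?_ ?_
        · exact Finset.disjoint_insert_right.mpr ⟨htT, hTZ.2⟩
        · exact Finset.disjoint_insert_right.mpr ⟨hTU.1, hUZ⟩
        · refine hcover.trans fun v => ?_
          simp only [Finset.mem_union, Finset.mem_insert]
          tauto
        · rwa [P.pairsOff_insert_of_mem_clique ht]
        · rw [P.pairsOff_insert_of_mem_clique ht, Finset.card_insert_of_notMem hTZ.1]
          omega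
        · rw [P.pairsOff_insert_of_mem_clique ht]
          omega

lemma regular_of_pairs_undecided {m k d : ℕ} (hT : P.clique.card = 2 * (m - s)) (hsm : s ≤ m)
    (hd : ∀ e, e ≤ s → e < k → d + e ≤ 2 * k - 1 + s) (hdm : d + 1 ≤ m + k)
    (R : Finset (Fin s)) (U Z : Finset σ) (hUT : Disjoint U P.clique) (hZT : Disjoint Z P.clique)
    (hUZ : Disjoint U Z)
    (hR : ∀ i ∈ R, P.left i ∉ U ∧ P.right i ∉ U ∧ P.left i ∉ Z ∧ P.right i ∉ Z)
    (hRc : ∀ i ∉ R, i ∈ P.pairsIn U ∨ i ∉ P.pairsOff Z)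
    (hZ : Z.card + (P.pairsOff Z).card = s) (hk : Z.card + k ≤ m + 1) :
    RegularModulo (supportIdeal K ((P.matchFamily k).link U Z)) (esymmList K σ d) := by
  have hsd : ∀ Z, Disjoint Z P.clique → P.clique \ Z = P.clique :=
    fun Z h => Finset.sdiff_eq_self_of_disjoint h.symm
  have base : ∀ U Z, Disjoint Z P.clique → Disjoint U Z → Z.card + (P.pairsOff Z).card = s →
      Z.card + k = m + 1 →
      RegularModulo (supportIdeal K ((P.matchFamily k).link U Z)) (esymmList K σ d) := by
    intro U Z hZT hUZ hZ hk
    refine RegularModulo.link_of_compl_notMem ?_ hUZ ?_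
    · rw [mem_matchFamily, inducedMatchNum_compl, hsd Z hZT]
      omega
    · rw [Finset.card_compl, P.card_univ_eq]
      omega
  induction R using Finset.induction_on generalizing U Z with
  | empty =>
    rcases hk.eq_or_lt with hk | hk
    · exact base U Z hZT hUZ hZ hk
    refine P.regular_of_clique_undecided hd P.clique U Z subset_rfl hUT.symm hZT.symm hUZ
      ?_ ?_ ?_ ?_
    · exact fun v hv => by simp [hv]
    · refine Finset.card_le_card fun i hi => ?_
      exact (hRc i (by simp)).resolve_right (not_not.mpr hi)
    · rw [hsd Z hZT]; omega
    · rw [hsd Z hZT]; omega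
  | insert i R hi ih =>
    rcases hk.eq_or_lt with hk | hk
    · exact base U Z hZT hUZ hZ hk
    obtain ⟨hlU, hrU, hlZ, hrZ⟩ := hR i (by simp)
    have hlr : P.left i ≠ P.right i := P.left_ne_right i i
    have hioff : i ∈ P.pairsOff Z := by simp [pairsOff, hlZ, hrZ]
    have hne : ∀ j ∈ R, j ≠ i := fun j hj h => hi (h ▸ hj)
    have hoff := Finset.card_erase_add_one hioff
    have hR' : ∀ j ∈ R, P.left j ∉ insert (P.right i) (insert (P.left i) U) ∧
        P.right j ∉ insert (P.right i) (insert (P.left i) U) ∧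
        P.left j ∉ insert (P.right i) (insert (P.left i) Z) ∧
        P.right j ∉ insert (P.right i) (insert (P.left i) Z) := by
      intro j hj
      have := hR j (by simp [hj])
      simp [P.left_injective.eq_iff, P.right_injective.eq_iff, hne j hj, P.left_ne_right,
        (P.left_ne_right i j).symm, this]
    refine RegularModulo.link_of_insert hlZ _ (RegularModulo.link_of_insert hrZ _ ?_ ?_) ?_
    · refine ih _ Z ?_ hZT ?_ ?_ ?_ hZ hk.le
      · simp [hUT, P.left_notMem, P.right_notMem]
      · simp [hUZ, hlZ, hrZ]
      · intro j hj
        have := hR' j hj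
        simp_all
      · intro j hj
        by_cases hji : j = i
        · subst hji
          exact Or.inl (by simp [pairsIn])
        · refine (hRc j (by simp [hji, hj])).imp_left fun h => P.pairsIn_mono ?_ h
          exact (Finset.subset_insert _ _).trans (Finset.subset_insert _ _)
    · refine ih _ _ ?_ ?_ ?_ ?_ ?_ ?_ ?_
      · simp [hUT, P.left_notMem]
      · simp [hZT, P.right_notMem]
      · simp [hUZ, hlZ, hrU, hlr.symm]
      · intro j hj
        have := hR' j hj
        simp_all
      · intro j hj
        rw [P.pairsOff_insert_right]
        by_cases hji : j = i
        · exact Or.inr (by simp [hji])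
        · refine (hRc j (by simp [hji, hj])).imp (fun h => P.pairsIn_mono ?_ h) fun h => by simp [h]
          exact Finset.subset_insert _ _
      · rw [P.pairsOff_insert_right, Finset.card_insert_of_notMem hrZ]
        omega
      · rw [Finset.card_insert_of_notMem hrZ]
        omega
    · refine ih _ _ hUT ?_ ?_ ?_ ?_ ?_ ?_
      · simp [hZT, P.left_notMem]
      · simp [hUZ, hlU]
      · intro j hj
        have := hR' j hj
        simp_all
      · intro j hj
        rw [P.pairsOff_insert_left]
        by_cases hji : j = i
        · exact Or.inr (by simp [hji])
        · exact (hRc j (by simp [hji, hj])).imp_right fun h => by simp [h]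
      · rw [P.pairsOff_insert_left, Finset.card_insert_of_notMem hlZ]
        omega
      · rw [Finset.card_insert_of_notMem hlZ]
        omega

/-- The first `d` elementary symmetric polynomials form a regular sequence modulo the ideal of
`k`-matchings. -/
lemma regular_esymmList_matchFamily {m k d : ℕ} (hT : P.clique.card = 2 * (m - s)) (hsm : s ≤ m)
    (hkm : k ≤ m) (hd : ∀ e, e ≤ s → e < k → d + e ≤ 2 * k - 1 + s) (hdm : d + 1 ≤ m + k) :
    RegularModulo (supportIdeal K (P.matchFamily k)) (esymmList K σ d) := by
  have h := P.regular_of_pairs_undecided (K := K) hT hsm hd hdm Finset.univ ∅ ∅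
    (by simp) (by simp) (by simp) (by simp) (by simp) (by simp [pairsOff]) (by simp; omega)
  have e : (P.matchFamily k).link ∅ ∅ = P.matchFamily k := by
    ext F
    change F ∈ (P.matchFamily k).link ∅ ∅ ↔ F ∈ P.matchFamily k
    simp [mem_link]
  rwa [e] at h

end PairsAndClique

section DepthUpperBound

variable {K : Type} [Field K] {σ : Type}

instance idealOfVars_isMaximal : (idealOfVars σ K).IsMaximal := by
  have h : idealOfVars σ K = RingHom.ker (constantCoeff : MvPolynomial σ K →+* K) := by
    ext p
    rw [← pow_one (idealOfVars σ K), mem_pow_idealOfVars_iff', RingHom.mem_ker, constantCoeff_eq]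
    exact ⟨fun h => h 0 (by simp),
      fun h x hx => by rwa [(Finsupp.degree_eq_zero_iff x).mp (Nat.lt_one_iff.mp hx)]⟩
  rw [h]
  exact RingHom.ker_isMaximal_of_surjective _ fun c => ⟨C c, constantCoeff_C σ c⟩

lemma ringKrullDim_mvPolynomial_eq_card (τ : Type) [Fintype τ] :
    ringKrullDim (MvPolynomial τ K) = Fintype.card τ := by
  rw [MvPolynomial.ringKrullDim_of_isNoetherianRing, ringKrullDim_eq_zero_of_field, zero_add,
    Nat.card_eq_fintype_card]

lemma RegularModulo.length_le_card [Fintype σ] {𝓕 : UpperSet (Finset σ)} (h𝓕 : ∅ ∉ 𝓕)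
    {rs : List (MvPolynomial σ K)} (hrs : ∀ r ∈ rs, r ∈ idealOfVars σ K)
    (h : RegularModulo (supportIdeal K 𝓕) rs) : rs.length ≤ Fintype.card σ := by
  have := (RegularModulo.length_le_ringKrullDim (idealOfVars σ K) rs _ _ 1 (by simp)
    (supportIdeal_le_idealOfVars h𝓕) hrs h).trans (ringKrullDim_quotient_le _)
  rw [ringKrullDim_mvPolynomial_eq_card] at this
  exact_mod_cast this

variable [DecidableEq σ]

lemma ringKrullDim_quotient_notSubset_le (F : Finset σ) :
    ringKrullDim (MvPolynomial σ K ⧸ supportIdeal K (notSubset F)) ≤ F.card := by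
  have h := ringKrullDim_le_of_surjective
    ((Ideal.Quotient.mk (supportIdeal K (notSubset F))).comp
      (rename ((↑) : F → σ)).toRingHom) ?_
  · rwa [ringKrullDim_mvPolynomial_eq_card, Fintype.card_coe] at h
  rw [← RingHom.range_eq_top, eq_top_iff]
  rintro x -
  obtain ⟨p, rfl⟩ := Ideal.Quotient.mk_surjective x
  induction p using MvPolynomial.induction_on with
  | C a => exact ⟨C a, by simp⟩
  | add p q hp hq => rw [map_add]; exact add_mem hp hq
  | mul_X p v hp =>
    rw [map_mul]
    refine mul_mem hp ?_
    by_cases hv : v ∈ F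
    · exact ⟨X ⟨v, hv⟩, by simp⟩
    · have : Ideal.Quotient.mk (supportIdeal K (notSubset F)) (X v) = 0 := by
        refine Ideal.Quotient.eq_zero_iff_mem.mpr ?_
        rw [← mul_one (X v), X_mul_mem_supportIdeal]
        exact fun α _ hsub => hv (hsub (by simp))
      rw [this]
      exact zero_mem _

variable [Fintype σ]

/-- A regular sequence modulo `supportIdeal K 𝓕` is not longer than any maximal set outside
`𝓕`. -/
lemma RegularModulo.length_le_card_of_maximal {𝓕 : UpperSet (Finset σ)} {F : Finset σ}
    (hF : F ∉ 𝓕) (hmax : ∀ v ∉ F, insert v F ∈ 𝓕) {rs : List (MvPolynomial σ K)}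
    (hrs : ∀ r ∈ rs, r ∈ idealOfVars σ K) (h : RegularModulo (supportIdeal K 𝓕) rs) :
    rs.length ≤ F.card := by
  have hcolon : ∀ g, g ∈ supportIdeal K (notSubset F) ↔ sqMon K F * g ∈ supportIdeal K 𝓕 := by
    intro g
    rw [mem_supportIdeal, sqMon_mul_mem_supportIdeal]
    refine forall₂_congr fun α _ => ?_
    rw [mem_notSubset]
    constructor
    · intro hsub
      obtain ⟨v, hv, hvF⟩ := Finset.not_subset.mp hsub
      refine 𝓕.upper ?_ (hmax v hvF)
      exact Finset.insert_subset (Finset.mem_union_right _ hv) Finset.subset_union_left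
    · intro hmem hsub
      exact hF (Finset.union_eq_left.mpr hsub ▸ hmem)
  have hle : supportIdeal K (notSubset F) ≤ idealOfVars σ K :=
    supportIdeal_le_idealOfVars (by simp [mem_notSubset])
  have := (RegularModulo.length_le_ringKrullDim (idealOfVars σ K) rs _ _ _ hcolon hle hrs h).trans
    (ringKrullDim_quotient_notSubset_le F)
  exact_mod_cast this

end DepthUpperBound

section Depth

variable {K : Type} [Field K] {σ : Type} [Fintype σ] {𝓕 : UpperSet (Finset σ)}

lemma bddAbove_polyDepth_set (h𝓕 : ∅ ∉ 𝓕) :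
    BddAbove {k | ∃ rs : List (MvPolynomial σ K), rs.length = k ∧
      (∀ r ∈ rs, r ∈ Ideal.span (Set.range (X : σ → MvPolynomial σ K))) ∧
      RingTheory.Sequence.IsRegular (MvPolynomial σ K ⧸ supportIdeal K 𝓕) rs} := by
  refine ⟨Fintype.card σ, ?_⟩
  rintro _ ⟨rs, rfl, hrs, h⟩
  exact ((RegularModulo.isRegular_iff _ _).mp h).1.length_le_card h𝓕 hrs

lemma le_polyDepth_of_regular_esymmList (h𝓕 : ∅ ∉ 𝓕) {d : ℕ}
    (h : RegularModulo (supportIdeal K 𝓕) (esymmList K σ d)) :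
    d ≤ polyDepth K (supportIdeal K 𝓕) := by
  refine le_csSup (bddAbove_polyDepth_set h𝓕) ⟨esymmList K σ d, by simp [esymmList],
    fun r hr => mem_idealOfVars_of_mem_esymmList hr, (RegularModulo.isRegular_iff _ _).mpr ⟨h, ?_⟩⟩
  refine ne_top_of_le_ne_top (Ideal.IsMaximal.ne_top (I := idealOfVars σ K) inferInstance) ?_
  refine sup_le (supportIdeal_le_idealOfVars h𝓕) (Ideal.span_le.mpr fun r hr => ?_)
  exact mem_idealOfVars_of_mem_esymmList hr

lemma polyDepth_le_of_maximal [DecidableEq σ] {F : Finset σ} (hF : F ∉ 𝓕)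
    (hmax : ∀ v ∉ F, insert v F ∈ 𝓕) :
    polyDepth K (supportIdeal K 𝓕) ≤ F.card := by
  refine csSup_le' ?_
  rintro _ ⟨rs, rfl, hrs, h⟩
  exact ((RegularModulo.isRegular_iff _ _).mp h).1.length_le_card_of_maximal hF hmax hrs

end Depth

namespace PairsAndClique

variable {K : Type} [Field K] {σ : Type} {s : ℕ} (P : PairsAndClique σ s)

/-- The disjoint union of the edges `{left i, right i}` and the complete graph on `clique`. -/
def graph : SimpleGraph σ where
  Adj a b := a ≠ b ∧ ((∃ i, a = P.left i ∧ b = P.right i) ∨ (∃ i, a = P.right i ∧ b = P.left i) ∨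
    (a ∈ P.clique ∧ b ∈ P.clique))
  symm := ⟨fun _ _ h => ⟨h.1.symm, by
    rcases h.2 with ⟨i, ha, hb⟩ | ⟨i, ha, hb⟩ | ⟨ha, hb⟩
    · exact Or.inr (Or.inl ⟨i, hb, ha⟩)
    · exact Or.inl ⟨i, hb, ha⟩
    · exact Or.inr (Or.inr ⟨hb, ha⟩)⟩⟩
  loopless := ⟨fun _ h => h.1 rfl⟩

lemma graph_adj_left_right (i : Fin s) : P.graph.Adj (P.left i) (P.right i) :=
  ⟨P.left_ne_right i i, Or.inl ⟨i, rfl, rfl⟩⟩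

lemma graph_adj_of_mem_clique {a b : σ} (ha : a ∈ P.clique) (hb : b ∈ P.clique) (hab : a ≠ b) :
    P.graph.Adj a b :=
  ⟨hab, Or.inr (Or.inr ⟨ha, hb⟩)⟩

/-- A superadditive function on exponents which is at least `k` on all monomials of the `k`-th
power of the edge ideal. -/
def weight (α : σ →₀ ℕ) : ℕ :=
  ∑ i, min (α (P.left i)) (α (P.right i)) + (∑ t ∈ P.clique, α t) / 2

lemma weight_add_le (α β : σ →₀ ℕ) : P.weight α + P.weight β ≤ P.weight (α + β) := by
  have h : ∑ i, min (α (P.left i)) (α (P.right i)) + ∑ i, min (β (P.left i)) (β (P.right i)) ≤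
      ∑ i, min ((α + β) (P.left i)) ((α + β) (P.right i)) := by
    rw [← Finset.sum_add_distrib]
    refine Finset.sum_le_sum fun i _ => ?_
    simp only [Finsupp.add_apply]
    omega
  simp only [weight]
  simp only [Finsupp.add_apply, Finset.sum_add_distrib] at h ⊢
  omega

lemma weight_mono {α β : σ →₀ ℕ} (h : α ≤ β) : P.weight α ≤ P.weight β := by
  obtain ⟨γ, rfl⟩ := le_iff_exists_add.mp h
  exact le_trans (Nat.le_add_right _ _) (P.weight_add_le α γ)

variable (K) in
/-- The ideal spanned by the monomials of weight at least `k`. -/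
noncomputable def weightIdeal (k : ℕ) : Ideal (MvPolynomial σ K) :=
  restrictSupportIdeal K {α | k ≤ P.weight α} fun _ _ h hα => le_trans hα (P.weight_mono h)

lemma mem_weightIdeal {k : ℕ} {f : MvPolynomial σ K} :
    f ∈ P.weightIdeal K k ↔ ∀ α ∈ f.support, k ≤ P.weight α := Iff.rfl

lemma weightIdeal_mul_le (j k : ℕ) :
    P.weightIdeal K j * P.weightIdeal K k ≤ P.weightIdeal K (j + k) := by
  classical
  refine Ideal.mul_le.mpr fun f hf g hg => P.mem_weightIdeal.mpr fun γ hγ => ?_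
  obtain ⟨α, hα, β, hβ, rfl⟩ := Finset.mem_add.mp (support_mul f g hγ)
  exact le_trans (add_le_add (P.mem_weightIdeal.mp hf α hα) (P.mem_weightIdeal.mp hg β hβ))
    (P.weight_add_le α β)

variable [DecidableEq σ]

lemma weight_sum_single (F : Finset σ) :
    P.weight (∑ i ∈ F, Finsupp.single i 1) = P.inducedMatchNum F := by
  have h : ∀ v, (∑ i ∈ F, Finsupp.single i 1 : σ →₀ ℕ) v = if v ∈ F then 1 else 0 := by
    intro v
    simp [Finsupp.finsetSum_apply, Finsupp.single_apply]
  have h' : ∀ i, min (if P.left i ∈ F then 1 else 0) (if P.right i ∈ F then 1 else 0) =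
      if P.left i ∈ F ∧ P.right i ∈ F then 1 else 0 := by
    intro i
    split_ifs <;> simp_all
  simp only [weight, inducedMatchNum, pairsIn, h, h', Finset.sum_boole, Nat.cast_id]
  congr 3
  ext
  simp [and_comm]

lemma sqMon_mem_weightIdeal {k : ℕ} {F : Finset σ} :
    sqMon K F ∈ P.weightIdeal K k ↔ k ≤ P.inducedMatchNum F := by
  classical
  rw [mem_weightIdeal, sqMon_eq_monomial, support_monomial, if_neg one_ne_zero]
  simp [P.weight_sum_single]

lemma edgeIdeal_pow_le_weightIdeal (k : ℕ) :
    edgeIdeal K P.graph ^ k ≤ P.weightIdeal K k := by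
  induction k with
  | zero => exact fun f _ => P.mem_weightIdeal.mpr fun _ _ => Nat.zero_le _
  | succ k ih =>
    rw [pow_succ]
    refine (Ideal.mul_mono ih ?_).trans (P.weightIdeal_mul_le k 1)
    refine Ideal.span_le.mpr ?_
    rintro _ ⟨a, b, hab, rfl⟩
    rw [← sqMon_pair hab.ne]
    refine P.sqMon_mem_weightIdeal.mpr ?_
    rw [inducedMatchNum]
    rcases hab.2 with ⟨i, rfl, rfl⟩ | ⟨i, rfl, rfl⟩ | ⟨ha, hb⟩
    · have : 0 < (P.pairsIn {P.left i, P.right i}).card :=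
        Finset.card_pos.mpr ⟨i, by simp [pairsIn]⟩
      omega
    · have : 0 < (P.pairsIn {P.right i, P.left i}).card :=
        Finset.card_pos.mpr ⟨i, by simp [pairsIn]⟩
      omega
    · have : {a, b} ∩ P.clique = {a, b} := Finset.inter_eq_left.mpr (by
        simp [Finset.insert_subset_iff, ha, hb])
      rw [this, Finset.card_pair hab.ne]
      omega

lemma exists_edge_of_inducedMatchNum_pos {k : ℕ} {F : Finset σ} (h : k + 1 ≤ P.inducedMatchNum F) :
    ∃ a ∈ F, ∃ b ∈ F, P.graph.Adj a b ∧ k ≤ P.inducedMatchNum ((F.erase a).erase b) := by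
  by_cases hp : (P.pairsIn F).Nonempty
  · obtain ⟨i, hi⟩ := hp
    have hi' : P.left i ∈ F ∧ P.right i ∈ F := by simpa [pairsIn] using hi
    refine ⟨_, hi'.1, _, hi'.2, P.graph_adj_left_right i, ?_⟩
    have h₁ : P.pairsIn ((F.erase (P.left i)).erase (P.right i)) = (P.pairsIn F).erase i := by
      ext j
      simp only [pairsIn, Finset.mem_filter, Finset.mem_erase, ne_eq, P.left_injective.eq_iff,
        P.right_injective.eq_iff, (P.left_ne_right i j).symm, P.left_ne_right j i]
      tauto
    have h₂ : (F.erase (P.left i)).erase (P.right i) ∩ P.clique = F ∩ P.clique := by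
      ext v
      have h₁ : v ∈ P.clique → v ≠ P.left i := fun h h' => P.left_notMem i (h' ▸ h)
      have h₂ : v ∈ P.clique → v ≠ P.right i := fun h h' => P.right_notMem i (h' ▸ h)
      simp only [Finset.mem_inter, Finset.mem_erase]
      tauto
    have := Finset.card_erase_add_one hi
    rw [inducedMatchNum] at h ⊢
    rw [h₁, h₂]
    omega
  · have h0 : (P.pairsIn F).card = 0 := by simpa using hp
    have h2 : 1 < (F ∩ P.clique).card := by
      rw [inducedMatchNum] at h
      omega
    obtain ⟨a, ha, b, hb, hab⟩ := Finset.one_lt_card.mp h2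
    obtain ⟨haF, haT⟩ := Finset.mem_inter.mp ha
    obtain ⟨hbF, hbT⟩ := Finset.mem_inter.mp hb
    refine ⟨a, haF, b, hbF, P.graph_adj_of_mem_clique haT hbT hab, ?_⟩
    have e : (F.erase a).erase b ∩ P.clique = ((F ∩ P.clique).erase a).erase b := by
      simp [Finset.erase_inter]
    have h₁ := Finset.card_erase_add_one ha
    have h₂ := Finset.card_erase_add_one (Finset.mem_erase.mpr ⟨hab.symm, hb⟩)
    rw [inducedMatchNum] at h ⊢
    rw [e]
    omega

lemma sqMon_mem_edgeIdeal_pow {k : ℕ} {F : Finset σ} (h : k ≤ P.inducedMatchNum F) :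
    sqMon K F ∈ edgeIdeal K P.graph ^ k := by
  induction k generalizing F with
  | zero => simp
  | succ k ih =>
    obtain ⟨a, ha, b, hb, hab, hk⟩ := P.exists_edge_of_inducedMatchNum_pos h
    have e : sqMon K F = sqMon K ((F.erase a).erase b) * (X a * X b) := by
      rw [sqMon, ← Finset.mul_prod_erase F _ ha, ← Finset.mul_prod_erase (F.erase a) _
        (Finset.mem_erase.mpr ⟨hab.ne.symm, hb⟩), sqMon]
      ring
    rw [e, pow_succ]
    exact Ideal.mul_mem_mul (ih hk) (Ideal.subset_span ⟨a, b, hab, rfl⟩)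

lemma sqfreePower_edgeIdeal (k : ℕ) :
    sqfreePower K (edgeIdeal K P.graph) k = supportIdeal K (P.matchFamily k) := by
  rw [← span_sqMon_eq_supportIdeal, sqfreePower]
  congr 1
  ext p
  refine exists_congr fun F => and_congr_right fun hp => ?_
  rw [hp, mem_matchFamily]
  exact ⟨fun h => P.sqMon_mem_weightIdeal.mp (P.edgeIdeal_pow_le_weightIdeal k h),
    P.sqMon_mem_edgeIdeal_pow⟩

/-- The union of the pairs indexed by `A` and the set `C`. -/
def ofParts (A : Finset (Fin s)) (C : Finset σ) : Finset σ :=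
  A.image P.left ∪ A.image P.right ∪ C

variable {A : Finset (Fin s)} {C : Finset σ}

lemma mem_ofParts {v : σ} : v ∈ P.ofParts A C ↔
    ((∃ i ∈ A, P.left i = v) ∨ ∃ i ∈ A, P.right i = v) ∨ v ∈ C := by
  simp [ofParts, or_assoc]

lemma left_mem_ofParts (hC : C ⊆ P.clique) {i : Fin s} : P.left i ∈ P.ofParts A C ↔ i ∈ A := by
  have h₁ : P.left i ∉ C := fun h => P.left_notMem i (hC h)
  have h₂ : ∀ j, P.right j ≠ P.left i := fun j => (P.left_ne_right i j).symm
  simp [mem_ofParts, h₁, h₂, P.left_injective.eq_iff]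

lemma right_mem_ofParts (hC : C ⊆ P.clique) {i : Fin s} : P.right i ∈ P.ofParts A C ↔ i ∈ A := by
  have h₁ : P.right i ∉ C := fun h => P.right_notMem i (hC h)
  have h₂ : ∀ j, P.left j ≠ P.right i := fun j => P.left_ne_right j i
  simp [mem_ofParts, h₁, h₂, P.right_injective.eq_iff]

lemma ofParts_inter_clique (hC : C ⊆ P.clique) : P.ofParts A C ∩ P.clique = C := by
  ext v
  rw [Finset.mem_inter, mem_ofParts]
  constructor
  · rintro ⟨(⟨i, -, rfl⟩ | ⟨i, -, rfl⟩) | h, hv⟩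
    · exact absurd hv (P.left_notMem i)
    · exact absurd hv (P.right_notMem i)
    · exact h
  · exact fun h => ⟨Or.inr h, hC h⟩

lemma card_ofParts (hC : C ⊆ P.clique) : (P.ofParts A C).card = 2 * A.card + C.card := by
  rw [P.card_eq, P.ofParts_inter_clique hC]
  simp [P.left_mem_ofParts hC, P.right_mem_ofParts hC, two_mul]

lemma inducedMatchNum_ofParts (hC : C ⊆ P.clique) :
    P.inducedMatchNum (P.ofParts A C) = A.card + C.card / 2 := by
  rw [inducedMatchNum, P.ofParts_inter_clique hC]
  simp [pairsIn, P.left_mem_ofParts hC, P.right_mem_ofParts hC]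

lemma empty_notMem_matchFamily {k : ℕ} (hk : 1 ≤ k) : ∅ ∉ P.matchFamily k := by
  simp [mem_matchFamily, inducedMatchNum, pairsIn]
  omega

lemma indeg_sqfreePower {m k : ℕ} (hT : P.clique.card = 2 * (m - s)) (hkm : k ≤ m) :
    indeg K (sqfreePower K (edgeIdeal K P.graph) k) = 2 * k := by
  rw [sqfreePower_edgeIdeal]
  refine IsLeast.csInf_eq ⟨?_, ?_⟩
  · obtain ⟨A, -, hA⟩ := Finset.exists_subset_card_eq (s := (Finset.univ : Finset (Fin s)))
      (n := min k s) (by simp)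
    obtain ⟨C, hC, hCc⟩ := Finset.exists_subset_card_eq (s := P.clique)
      (n := 2 * (k - min k s)) (by omega)
    refine ⟨P.ofParts A C, ?_, sqMon_mem_supportIdeal.mpr (P.mem_matchFamily.mpr ?_)⟩
    · rw [P.card_ofParts hC]; omega
    · rw [P.inducedMatchNum_ofParts hC]; omega
  · rintro _ ⟨F, rfl, hF⟩
    exact (Nat.mul_le_mul_left 2 (sqMon_mem_supportIdeal.mp hF)).trans
      (P.two_mul_inducedMatchNum_le_card F)

variable [Fintype σ]

lemma le_polyDepth {m k d : ℕ} (hT : P.clique.card = 2 * (m - s)) (hsm : s ≤ m) (hk : 1 ≤ k)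
    (hkm : k ≤ m) (hd : ∀ e, e ≤ s → e < k → d + e ≤ 2 * k - 1 + s) (hdm : d + 1 ≤ m + k) :
    d ≤ polyDepth K (sqfreePower K (edgeIdeal K P.graph) k) := by
  rw [sqfreePower_edgeIdeal]
  exact le_polyDepth_of_regular_esymmList (P.empty_notMem_matchFamily hk)
    (P.regular_esymmList_matchFamily hT hsm hkm hd hdm)

lemma polyDepth_le {m k : ℕ} (hT : P.clique.card = 2 * (m - s)) (hsk : s < k) (hkm : k ≤ m) :
    polyDepth K (sqfreePower K (edgeIdeal K P.graph) k) ≤ 2 * k - 1 := by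
  obtain ⟨C, hC, hCc⟩ := Finset.exists_subset_card_eq (s := P.clique) (n := 2 * (k - s) - 1)
    (by omega)
  rw [sqfreePower_edgeIdeal]
  refine (polyDepth_le_of_maximal (F := P.ofParts Finset.univ C) ?_ fun v hv => ?_).trans ?_
  · rw [mem_matchFamily, P.inducedMatchNum_ofParts hC, Finset.card_fin]
    omega
  · have hvT : v ∈ P.clique := by
      rcases P.cover v with h | ⟨i, rfl | rfl⟩
      · exact h
      · simp [P.left_mem_ofParts hC] at hv
      · simp [P.right_mem_ofParts hC] at hv
    have hvC : v ∉ C := fun h => hv (P.mem_ofParts.mpr (Or.inr h))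
    have e : insert v (P.ofParts Finset.univ C) = P.ofParts Finset.univ (insert v C) := by
      simp [ofParts, Finset.union_insert]
    rw [e, mem_matchFamily, P.inducedMatchNum_ofParts (Finset.insert_subset hvT hC),
      Finset.card_fin, Finset.card_insert_of_notMem hvC]
    omega
  · rw [P.card_ofParts hC, Finset.card_fin]
    omega

lemma nDepth_eq_zero_iff {m k : ℕ} (hT : P.clique.card = 2 * (m - s)) (hsm : s < m) (hk : 1 ≤ k)
    (hkm : k ≤ m) : nDepth K (edgeIdeal K P.graph) k = 0 ↔ s + 1 ≤ k := by
  rw [nDepth, P.indeg_sqfreePower hT hkm]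
  constructor
  · intro h
    by_contra hks
    have := P.le_polyDepth (K := K) (d := 2 * k) hT hsm.le hk hkm (by omega) (by omega)
    omega
  · intro hks
    have h₁ := P.le_polyDepth (K := K) (d := 2 * k - 1) hT hsm.le hk hkm (by omega) (by omega)
    have h₂ := P.polyDepth_le (K := K) hT hks hkm
    omega

end PairsAndClique

lemma two_mul_card_le_of_isMatchingSet {V : Type} [Fintype V] [DecidableEq V] {G : SimpleGraph V}
    {M : Finset (Sym2 V)} (hM : IsMatchingSet G M) : 2 * M.card ≤ Fintype.card V := by
  have hcard : ∀ e ∈ M, e.toFinset.card = 2 := fun e he =>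
    Sym2.card_toFinset_of_not_isDiag e (G.not_isDiag_of_mem_edgeSet (hM.1 he))
  have hdisj : ∀ e ∈ M, ∀ f ∈ M, e ≠ f → Disjoint e.toFinset f.toFinset := by
    intro e he f hf hef
    refine Finset.disjoint_left.mpr fun v hve hvf => ?_
    exact hM.2 e he f hf hef v (Sym2.mem_toFinset.mp hve) (Sym2.mem_toFinset.mp hvf)
  have h := Finset.card_biUnion hdisj
  rw [Finset.sum_const_nat hcard] at h
  rw [mul_comm, ← h]
  exact Finset.card_le_univ _

lemma matchNum_eq_of_perfect {m : ℕ} {G : SimpleGraph (Fin (2 * m))}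
    (hG : ∀ a b : Fin (2 * m), a ≠ b → (a : ℕ) / 2 = b / 2 → G.Adj a b) : matchNum G = m := by
  refine IsGreatest.csSup_eq ⟨?_, ?_⟩
  · let e : Fin m → Sym2 (Fin (2 * m)) := fun i => s(⟨2 * i, by omega⟩, ⟨2 * i + 1, by omega⟩)
    have hmem : ∀ (i : Fin m) v, v ∈ e i → (v : ℕ) / 2 = i := by
      intro i v hv
      rcases Sym2.mem_iff.mp hv with rfl | rfl <;> simp only <;> omega
    have he : Function.Injective e := by
      intro i j hij
      have hmem' : (⟨2 * i, by omega⟩ : Fin (2 * m)) ∈ e i := Sym2.mem_mk_left _ _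
      have h := hmem j _ (hij ▸ hmem')
      exact Fin.ext (by simp only at h; omega)
    refine ⟨Finset.univ.image e, ⟨?_, ?_⟩, ?_⟩
    · intro x hx
      obtain ⟨i, -, rfl⟩ := Finset.mem_image.mp (Finset.mem_coe.mp hx)
      exact hG _ _ (by simp) (by simp only; omega)
    · intro x hx y hy hxy v hvx hvy
      obtain ⟨i, -, rfl⟩ := Finset.mem_image.mp hx
      obtain ⟨j, -, rfl⟩ := Finset.mem_image.mp hy
      exact hxy (congrArg e (Fin.ext ((hmem i v hvx).symm.trans (hmem j v hvy))))
    · rw [Finset.card_image_of_injective _ he, Finset.card_fin]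
  · rintro _ ⟨M, hM, rfl⟩
    have := two_mul_card_le_of_isMatchingSet hM
    rw [Fintype.card_fin] at this
    omega

/-- The pairs `{2 * i, 2 * i + 1}` for `i < s`, and the remaining vertices of `Fin (2 * m)`. -/
def PairsAndClique.ofFin {s m : ℕ} (hsm : s ≤ m) : PairsAndClique (Fin (2 * m)) s where
  left i := ⟨2 * i, by omega⟩
  right i := ⟨2 * i + 1, by omega⟩
  clique := {v | 2 * s ≤ (v : ℕ)}
  left_injective i j h := Fin.ext (by have := congrArg Fin.val h; simp only at this; omega)
  right_injective i j h := Fin.ext (by have := congrArg Fin.val h; simp only at this; omega)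
  left_ne_right i j h := by have := congrArg Fin.val h; simp only at this; omega
  left_notMem i := by simp
  right_notMem i := by simp; omega
  cover v := by
    rcases le_or_gt (2 * s) (v : ℕ) with h | h
    · exact Or.inl (by simpa using h)
    · refine Or.inr ⟨⟨v / 2, by omega⟩, ?_⟩
      rcases Nat.mod_two_eq_zero_or_one v with h' | h'
      · exact Or.inl (Fin.ext (by simp only; omega))
      · exact Or.inr (Fin.ext (by simp only; omega))

namespace PairsAndClique

variable {s m : ℕ} (hsm : s ≤ m)

lemma card_clique_ofFin : (ofFin hsm).clique.card = 2 * (m - s) := by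
  have := (ofFin hsm).card_univ_eq
  rw [Fintype.card_fin] at this
  omega

lemma graph_ofFin_adj {a b : Fin (2 * m)} (hab : a ≠ b) (h : (a : ℕ) / 2 = b / 2) :
    (ofFin hsm).graph.Adj a b := by
  have hab' : (a : ℕ) ≠ b := fun h => hab (Fin.ext h)
  refine ⟨hab, ?_⟩
  rcases le_or_gt (2 * s) (a : ℕ) with ha | ha
  · exact Or.inr (Or.inr ⟨by simpa [ofFin] using ha, by simp [ofFin]; omega⟩)
  · rcases Nat.mod_two_eq_zero_or_one a with h' | h'
    · exact Or.inl ⟨⟨a / 2, by omega⟩, Fin.ext (by simp only [ofFin]; omega),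
        Fin.ext (by simp only [ofFin]; omega)⟩
    · exact Or.inr (Or.inl ⟨⟨a / 2, by omega⟩, Fin.ext (by simp only [ofFin]; omega),
        Fin.ext (by simp only [ofFin]; omega)⟩)

lemma noIsolated_graph_ofFin : NoIsolated (ofFin hsm).graph := by
  intro v
  rcases Nat.mod_two_eq_zero_or_one v with h | h
  · have hlt : (v : ℕ) + 1 < 2 * m := by omega
    exact ⟨⟨v + 1, hlt⟩, graph_ofFin_adj hsm (fun h => by simpa using congrArg Fin.val h)
      (by simp only; omega)⟩
  · have hlt : (v : ℕ) - 1 < 2 * m := by omega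
    refine ⟨⟨v - 1, hlt⟩, graph_ofFin_adj hsm (fun h => ?_) (by simp only; omega)⟩
    have := congrArg Fin.val h
    simp only at this
    omega

end PairsAndClique

/-- **Theorem 3.7.** Given positive integers `s < m`, there exists a graph `G` with
matching number `ν(G) = m` such that `g_{I(G)}(k) = 0` if and only if
`k ∈ {s+1,…,m}`. -/
theorem exists_graph_normalized_depth_zero_iff (K : Type) [Field K]
    (s m : ℕ) (hs : 1 ≤ s) (hsm : s < m) :
    ∃ (n : ℕ) (G : SimpleGraph (Fin n)), NoIsolated G ∧ matchNum G = m ∧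
      ∀ k : ℕ, 1 ≤ k → k ≤ m →
        (nDepth K (edgeIdeal K G) k = 0 ↔ s + 1 ≤ k) := by
  exact ⟨2 * m, (PairsAndClique.ofFin hsm.le).graph, PairsAndClique.noIsolated_graph_ofFin hsm.le,
    matchNum_eq_of_perfect fun _ _ => PairsAndClique.graph_ofFin_adj hsm.le,
    fun _ => (PairsAndClique.ofFin hsm.le).nDepth_eq_zero_iff
      (PairsAndClique.card_clique_ofFin hsm.le) hsm⟩
end
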